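/- Let m ∈ ℕ and let f be any of the following derivation modes: t; =k'' or ≥k'' for some k'' ≥ m; (≥k''∧≤k') for some k' ≥ k'' ≥ m; or (t∧=k), (t∧≤k), (t∧≥k) for an arbitrary k ∈ ℕ. Then the family of programmed languages of index at most m equals the family of languages of index at most m generated by CD grammar systems (with arbitrarily many context-free components) all of whose components work in mode f: L_m(P, CF[−λ]) = L_m(CD_∞, CF[−λ], f), both with and without erasing rules. -/

import Mathlib

namespace CDHybrid

/-- Symbols: nonterminals are natural numbers, terminals come from `T`. -/
abbrev Symb (T : Type) := ℕ ⊕ T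

/-- Sentential forms. -/
abbrev SForm (T : Type) := List (Symb T)

/-- A context-free rule `A → z`. -/
abbrev Rule (T : Type) := ℕ × SForm T

/-- Number of nonterminal occurrences in a sentential form. -/
def ntCount {T : Type} (x : SForm T) : ℕ := (x.filter Sum.isLeft).length

/-- One rewriting step using some rule of the rule set `P`. -/
def RStep {T : Type} (P : List (Rule T)) (x y : SForm T) : Prop :=
  ∃ r ∈ P, ∃ u v : SForm T, x = u ++ Sum.inl r.1 :: v ∧ y = u ++ r.2 ++ v

/-- `m`-step derivation using only rules of `P`. -/
def StepsN {T : Type} (P : List (Rule T)) : ℕ → SForm T → SForm T → Prop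
  | 0, x, y => x = y
  | m + 1, x, y => ∃ z, RStep P x z ∧ StepsN P m z y

/-- `m`-step derivation using only rules of `P`, all intermediate (and the final)
sentential forms having at most `b` occurrences of nonterminals. -/
def StepsNB {T : Type} (P : List (Rule T)) (b : ℕ) : ℕ → SForm T → SForm T → Prop
  | 0, x, y => x = y
  | m + 1, x, y => ∃ z, RStep P x z ∧ ntCount z ≤ b ∧ StepsNB P b m z y

/-- Derivation modes of CD grammar systems. -/
inductive Mode where
  | eq : ℕ → Mode
  | le : ℕ → Mode
  | ge : ℕ → Mode
  | star : Mode
  | t : Mode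
  | conj : Mode → Mode → Mode

/-- The predicate of a derivation mode: `modeOK P f m y` holds if an `m`-step
derivation by the component `P` ending in `y` is acceptable for mode `f`. -/
def modeOK {T : Type} (P : List (Rule T)) : Mode → ℕ → SForm T → Prop
  | .eq k, m, _ => m = k
  | .le k, m, _ => m ≤ k
  | .ge k, m, _ => k ≤ m
  | .star, _, _ => True
  | .t, _, y => ¬ ∃ z, RStep P y z
  | .conj f g, m, y => modeOK P f m y ∧ modeOK P g m y

/-- A CD grammar system with context-free components. -/
structure CDGS (T : Type) where
  deg : ℕ
  start : ℕ
  comp : Fin deg → List (Rule T)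

/-- λ-freeness: no erasing rules. -/
def CDGS.LamFree {T : Type} (G : CDGS T) : Prop :=
  ∀ i : Fin G.deg, ∀ r ∈ G.comp i, r.2 ≠ []

/-- One derivation step of a component of `G` in mode `f`. -/
def CDGS.ModeStep {T : Type} (G : CDGS T) (f : Mode) (x y : SForm T) : Prop :=
  ∃ i : Fin G.deg, ∃ m : ℕ, StepsN (G.comp i) m x y ∧ modeOK (G.comp i) f m y

/-- One derivation step of a component of `G` in mode `f`, with all produced
sentential forms having at most `b` nonterminal occurrences. -/
def CDGS.ModeStepB {T : Type} (G : CDGS T) (f : Mode) (b : ℕ) (x y : SForm T) : Prop :=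
  ∃ i : Fin G.deg, ∃ m : ℕ, StepsNB (G.comp i) b m x y ∧ modeOK (G.comp i) f m y

/-- The language generated by `G` in mode `f`. -/
def CDGS.lang {T : Type} (G : CDGS T) (f : Mode) : Set (List T) :=
  { w | Relation.TransGen (G.ModeStep f) [Sum.inl G.start] (w.map Sum.inr) }

/-- The words of the language of `G` in mode `f` possessing a derivation of index
at most `b`, i.e., all sentential forms occurring in it have at most `b`
nonterminal occurrences. -/
def CDGS.langB {T : Type} (G : CDGS T) (f : Mode) (b : ℕ) : Set (List T) :=
  { w | ntCount ([Sum.inl G.start] : SForm T) ≤ b ∧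
      Relation.TransGen (G.ModeStepB f b) [Sum.inl G.start] (w.map Sum.inr) }

/-- Two languages are considered equal iff they differ at most in the empty word. -/
def EqL {T : Type} (L₁ L₂ : Set (List T)) : Prop := L₁ \ {[]} = L₂ \ {[]}

/-- The family `L(CD_n, CF[−λ], f)`; `lf = true` forbids erasing rules. -/
def CDFam (T : Type) (lf : Bool) (n : ℕ) (f : Mode) : Set (Set (List T)) :=
  { L | ∃ G : CDGS T, G.deg ≤ n ∧ (lf = true → G.LamFree) ∧ EqL (G.lang f) L }

/-- The family `L(CD_∞, CF[−λ], f)`. -/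
def CDFamInf (T : Type) (lf : Bool) (f : Mode) : Set (Set (List T)) :=
  { L | ∃ G : CDGS T, (lf = true → G.LamFree) ∧ EqL (G.lang f) L }

/-- The family `L_m(CD_n, CF[−λ], f)` of such languages of index at most `m`. -/
def CDFamInd (T : Type) (lf : Bool) (n : ℕ) (f : Mode) (m : ℕ) : Set (Set (List T)) :=
  { L | ∃ G : CDGS T, G.deg ≤ n ∧ (lf = true → G.LamFree) ∧ EqL (G.lang f) L ∧
      G.lang f ⊆ G.langB f m }

/-- The family `L_m(CD_∞, CF[−λ], f)`. -/
def CDFamIndInf (T : Type) (lf : Bool) (f : Mode) (m : ℕ) : Set (Set (List T)) :=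
  { L | ∃ G : CDGS T, (lf = true → G.LamFree) ∧ EqL (G.lang f) L ∧ G.lang f ⊆ G.langB f m }

/-- The family `L_fin(CD_∞, CF[−λ], f)`. -/
def CDFamFinInf (T : Type) (lf : Bool) (f : Mode) : Set (Set (List T)) :=
  { L | ∃ m : ℕ, 1 ≤ m ∧ L ∈ CDFamIndInf T lf f m }

/-- A context-free grammar. -/
structure CFG (T : Type) where
  start : ℕ
  rules : List (Rule T)

/-- The language generated by a context-free grammar. -/
def CFG.lang {T : Type} (G : CFG T) : Set (List T) :=
  { w | Relation.ReflTransGen (RStep G.rules) [Sum.inl G.start] (w.map Sum.inr) }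

/-- The words of `G.lang` having a derivation of index at most `m`. -/
def CFG.langB {T : Type} (G : CFG T) (m : ℕ) : Set (List T) :=
  { w | ntCount ([Sum.inl G.start] : SForm T) ≤ m ∧
      Relation.ReflTransGen (fun x y => RStep G.rules x y ∧ ntCount y ≤ m)
        [Sum.inl G.start] (w.map Sum.inr) }

/-- The family `L(CF)` of context-free languages. -/
def CFFam (T : Type) : Set (Set (List T)) := { L | ∃ G : CFG T, EqL G.lang L }

/-- The family `L_m(CF)` of context-free languages of index at most `m`. -/
def CFFamInd (T : Type) (m : ℕ) : Set (Set (List T)) :=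
  { L | ∃ G : CFG T, EqL G.lang L ∧ G.lang ⊆ G.langB m }

/-- The family `L_fin(CF)` of context-free languages of finite index. -/
def CFFamFin (T : Type) : Set (Set (List T)) :=
  { L | ∃ m : ℕ, 1 ≤ m ∧ L ∈ CFFamInd T m }

/-- A grammar is linear if every right-hand side contains at most one nonterminal. -/
def CFG.Linear {T : Type} (G : CFG T) : Prop := ∀ r ∈ G.rules, ntCount r.2 ≤ 1

/-- The family `L(LIN)` of linear context-free languages. -/
def LinFam (T : Type) : Set (Set (List T)) :=
  { L | ∃ G : CFG T, G.Linear ∧ EqL G.lang L }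

/-- The family `L(FIN)` of finite languages. -/
def FinFam (T : Type) : Set (Set (List T)) := { L | L.Finite }

/-- A programmed grammar with context-free rules. -/
structure PG (T : Type) where
  start : ℕ
  nLab : ℕ
  rule : Fin nLab → Rule T
  succ : Fin nLab → Set (Fin nLab)
  fail : Fin nLab → Set (Fin nLab)

def PG.LamFree {T : Type} (G : PG T) : Prop := ∀ r : Fin G.nLab, (G.rule r).2 ≠ []

/-- No appearance checking: all failure fields are empty. -/
def PG.NoAC {T : Type} (G : PG T) : Prop := ∀ r : Fin G.nLab, G.fail r = ∅

/-- One step of a programmed grammar on pairs (sentential form, label). -/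
def PG.PStep {T : Type} (G : PG T) (p q : SForm T × Fin G.nLab) : Prop :=
  (∃ u v : SForm T, p.1 = u ++ Sum.inl (G.rule p.2).1 :: v ∧
      q.1 = u ++ (G.rule p.2).2 ++ v ∧ q.2 ∈ G.succ p.2) ∨
  (Sum.inl (G.rule p.2).1 ∉ p.1 ∧ q.1 = p.1 ∧ q.2 ∈ G.fail p.2)

/-- The language generated by a programmed grammar. -/
def PG.lang {T : Type} (G : PG T) : Set (List T) :=
  { w | ∃ r₁ r₂ : Fin G.nLab,
      Relation.ReflTransGen G.PStep ([Sum.inl G.start], r₁) (w.map Sum.inr, r₂) }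

/-- The words of `G.lang` having a derivation of index at most `m`. -/
def PG.langB {T : Type} (G : PG T) (m : ℕ) : Set (List T) :=
  { w | ∃ r₁ r₂ : Fin G.nLab, ntCount ([Sum.inl G.start] : SForm T) ≤ m ∧
      Relation.ReflTransGen (fun p q => G.PStep p q ∧ ntCount q.1 ≤ m)
        ([Sum.inl G.start], r₁) (w.map Sum.inr, r₂) }

/-- The family `L_m(P, CF[−λ][, ac])`: programmed languages of index at most `m`;
`ac = false` forbids appearance checking, `lf = true` forbids erasing rules. -/
def PFamInd (T : Type) (lf ac : Bool) (m : ℕ) : Set (Set (List T)) :=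
  { L | ∃ G : PG T, (lf = true → G.LamFree) ∧ (ac = false → G.NoAC) ∧
      EqL G.lang L ∧ G.lang ⊆ G.langB m }

/-- The family `L_fin(P, CF[−λ][, ac])` of programmed languages of finite index. -/
def PFamFin (T : Type) (lf ac : Bool) : Set (Set (List T)) :=
  { L | ∃ m : ℕ, 1 ≤ m ∧ L ∈ PFamInd T lf ac m }

/-! A derivation of index at most `m` only visits forms with at most `m` nonterminals, so the string
of nonterminals present takes finitely many values. Recording it in a finite state, and replacing
nonterminals by copies so that those present are always pairwise distinct, turns both programmed
grammars and CD grammar systems into *separated grammars*: the state determines which nonterminals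
occur, each of them occurs once, and a rule is applied according to the state. Labels of programmed
grammars can carry this state. In a CD grammar system each nonterminal carries it as a tag.

* If a turn must consist of at least `K ≥ m` steps, the component of a rule rewrites its left-hand
  side and updates the tags of the at most `m - 1` other nonterminals. A chain of auxiliary
  nonterminals makes this take exactly `K` steps, so that no nonterminal can be skipped.
* If a turn must run until the component is stuck, one nonterminal is treated per turn: all
  nonterminals but the left-hand side are marked for the rule, then the rule is applied, then all
  marks are replaced by the new state. Each of these moves is guarded: its component rewrites the
  tagged nonterminals that must be absent into a trap symbol that is never rewritten. -/

variable {T : Type}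

lemma eq_and_eq_of_append_cons_eq {α : Type} {l₁ l₂ l₁' l₂' : List α} {a : α}
    (hnd : (l₁ ++ a :: l₂).Nodup) (h : l₁ ++ a :: l₂ = l₁' ++ a :: l₂') :
    l₁ = l₁' ∧ l₂ = l₂' := by
  have ha := (List.nodup_middle.1 hnd).notMem
  simp only [List.mem_append, not_or] at ha
  obtain ⟨h₁, -, h₂⟩ := (List.append_cons_inj_of_notMem ha.1 ha.2).1 h
  exact ⟨h₁, h₂⟩

/-! ### Sentential forms -/

section Forms

/-- The string of nonterminals of a sentential form, in order of occurrence. -/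
def nts (x : SForm T) : List ℕ := x.filterMap Sum.getLeft?

@[simp] lemma nts_nil : nts ([] : SForm T) = [] := rfl

@[simp] lemma nts_cons_inl (a : ℕ) (x : SForm T) : nts (Sum.inl a :: x) = a :: nts x := rfl

@[simp] lemma nts_cons_inr (c : T) (x : SForm T) : nts (Sum.inr c :: x) = nts x := rfl

@[simp] lemma nts_append (x y : SForm T) : nts (x ++ y) = nts x ++ nts y :=
  List.filterMap_append

@[simp] lemma nts_map_inl (l : List ℕ) : nts (l.map Sum.inl : SForm T) = l := by
  induction l <;> simp_all

@[simp] lemma nts_map_inr (w : List T) : nts (w.map Sum.inr) = [] := by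
  induction w <;> simp_all

@[simp] lemma mem_nts {a : ℕ} {x : SForm T} : a ∈ nts x ↔ Sum.inl a ∈ x := by
  simp [nts]

lemma ntCount_eq_length_nts (x : SForm T) : ntCount x = (nts x).length := by
  induction x with
  | nil => rfl
  | cons s x ih => cases s <;> simp_all [ntCount, List.filter_cons]

@[simp] lemma ntCount_singleton (a : ℕ) : ntCount ([Sum.inl a] : SForm T) = 1 := rfl

@[simp] lemma ntCount_append (x y : SForm T) : ntCount (x ++ y) = ntCount x + ntCount y := by
  simp [ntCount]

lemma nts_eq_append_cons {x : SForm T} {l₁ l₂ : List ℕ} {a : ℕ} (h : nts x = l₁ ++ a :: l₂) :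
    ∃ u v, x = u ++ Sum.inl a :: v ∧ nts u = l₁ ∧ nts v = l₂ := by
  obtain ⟨u, v', rfl, hu, hv'⟩ := List.filterMap_eq_append_iff.1 h
  obtain ⟨w, s, v, rfl, hw, hs, hv⟩ := List.filterMap_eq_cons_iff.1 hv'
  obtain rfl : s = Sum.inl a := by simpa using hs
  refine ⟨u ++ w, v, by simp, ?_, hv⟩
  have : nts w = [] := List.filterMap_eq_nil_iff.2 hw
  rw [nts_append, this, List.append_nil]
  exact hu

lemma singleton_inl_ne_map_inr (S : ℕ) (w : List T) :
    ([Sum.inl S] : SForm T) ≠ w.map Sum.inr := fun h => by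
  simpa using congrArg nts h

/-- The sentential form obtained by renaming every nonterminal along `g`. -/
def rename (g : ℕ → ℕ) (x : SForm T) : SForm T := x.map (Sum.map g id)

@[simp] lemma rename_nil (g : ℕ → ℕ) : rename g ([] : SForm T) = [] := rfl

@[simp] lemma rename_cons_inl (g : ℕ → ℕ) (a : ℕ) (x : SForm T) :
    rename g (Sum.inl a :: x) = Sum.inl (g a) :: rename g x := rfl

@[simp] lemma rename_cons_inr (g : ℕ → ℕ) (c : T) (x : SForm T) :
    rename g (Sum.inr c :: x) = Sum.inr c :: rename g x := rfl

@[simp] lemma rename_append (g : ℕ → ℕ) (x y : SForm T) :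
    rename g (x ++ y) = rename g x ++ rename g y :=
  List.map_append

@[simp] lemma rename_map_inr (g : ℕ → ℕ) (w : List T) :
    rename g (w.map Sum.inr) = w.map Sum.inr := by
  simp [rename]

@[simp] lemma rename_eq_nil {g : ℕ → ℕ} {x : SForm T} : rename g x = [] ↔ x = [] :=
  List.map_eq_nil_iff

@[simp] lemma nts_rename (g : ℕ → ℕ) (x : SForm T) : nts (rename g x) = (nts x).map g := by
  induction x with
  | nil => rfl
  | cons s x ih => cases s <;> simp_all

@[simp] lemma ntCount_rename (g : ℕ → ℕ) (x : SForm T) : ntCount (rename g x) = ntCount x := by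
  simp [ntCount_eq_length_nts]

lemma inl_mem_rename {g : ℕ → ℕ} {x : SForm T} {e : ℕ} :
    Sum.inl e ∈ rename g x ↔ ∃ a, Sum.inl a ∈ x ∧ g a = e := by
  simp only [← mem_nts, nts_rename, List.mem_map]

lemma rename_congr {g h : ℕ → ℕ} {x : SForm T} (H : ∀ a ∈ nts x, g a = h a) :
    rename g x = rename h x := by
  induction x with
  | nil => rfl
  | cons s x ih => cases s <;> simp_all

lemma rename_eq_append_cons {g : ℕ → ℕ} {x u v : SForm T} {b : ℕ}
    (h : rename g x = u ++ Sum.inl b :: v) :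
    ∃ u' a v', x = u' ++ Sum.inl a :: v' ∧ g a = b ∧ rename g u' = u ∧ rename g v' = v := by
  obtain ⟨u', x', rfl, hu, hx'⟩ := List.map_eq_append_iff.1 h
  obtain ⟨s, v', rfl, hs, hv⟩ := List.map_eq_cons_iff.1 hx'
  rcases s with a | c
  · exact ⟨u', a, v', rfl, by simpa using hs, hu, hv⟩
  · simp at hs

lemma rename_eq_map_inr {g : ℕ → ℕ} {x : SForm T} {w : List T} (h : rename g x = w.map Sum.inr) :
    x = w.map Sum.inr := by
  have hx : nts x = [] := by simpa using congrArg nts h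
  rwa [← rename_congr (g := id) (h := g) (by simp [hx]), rename, Sum.map_id_id, List.map_id] at h

end Forms

/-! ### Derivations by one component -/

section Derivations

variable {P : List (Rule T)}

/-- No rule of `P` is applicable to `x`, i.e. `x` may end a derivation in the terminating mode. -/
def Stuck (P : List (Rule T)) (x : SForm T) : Prop := ∀ r ∈ P, Sum.inl r.1 ∉ x

lemma stuck_iff_not_exists_rStep {x : SForm T} : Stuck P x ↔ ¬ ∃ z, RStep P x z := by
  refine ⟨fun h ⟨_, r, hr, u, v, hx, _⟩ => h r hr (by simp [hx]), fun h r hr hx => h ?_⟩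
  obtain ⟨u, v, huv⟩ := List.append_of_mem hx
  exact ⟨_, r, hr, u, v, huv, rfl⟩

lemma stuck_append {x y : SForm T} : Stuck P (x ++ y) ↔ Stuck P x ∧ Stuck P y := by
  simp only [Stuck, List.mem_append, not_or, forall_and]

lemma Stuck.eq_of_stepsN {j : ℕ} {x y : SForm T} (h : Stuck P x) (hs : StepsN P j x y) :
    j = 0 ∧ y = x := by
  cases j with
  | zero => exact ⟨rfl, hs.symm⟩
  | succ j =>
    obtain ⟨z, hz, _⟩ := hs
    exact absurd ⟨z, hz⟩ (stuck_iff_not_exists_rStep.1 h)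

lemma StepsN.inl_mem_of_forall_ne {c j : ℕ} {x y : SForm T} (hP : ∀ r ∈ P, r.1 ≠ c)
    (hs : StepsN P j x y) (hx : Sum.inl c ∈ x) : Sum.inl c ∈ y := by
  induction j generalizing x with
  | zero => exact hs ▸ hx
  | succ j ih =>
    obtain ⟨_, ⟨r, hr, u, v, rfl, rfl⟩, hs⟩ := hs
    have hc : c ≠ r.1 := (hP r hr).symm
    refine ih hs ?_
    simp only [List.mem_append, List.mem_cons, Sum.inl.injEq, hc, false_or] at hx ⊢
    tauto

lemma rStep_append {x₁ x₂ z : SForm T} (h : RStep P (x₁ ++ x₂) z) :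
    (∃ z₁, RStep P x₁ z₁ ∧ z = z₁ ++ x₂) ∨ ∃ z₂, RStep P x₂ z₂ ∧ z = x₁ ++ z₂ := by
  obtain ⟨r, hr, u, v, hx, rfl⟩ := h
  rcases List.append_eq_append_iff.1 hx with ⟨u', rfl, rfl⟩ | ⟨v', rfl, hv'⟩
  · exact .inr ⟨_, ⟨r, hr, u', v, rfl, rfl⟩, by simp⟩
  · rcases v' with _ | ⟨s, v'⟩
    · exact .inr ⟨_, ⟨r, hr, [], v, by simpa using hv'.symm, rfl⟩, by simp⟩
    · obtain ⟨rfl, rfl⟩ := List.cons_eq_cons.1 hv'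
      exact .inl ⟨_, ⟨r, hr, u, v', rfl, rfl⟩, by simp⟩

lemma StepsN.append_split {j : ℕ} {x₁ x₂ y : SForm T} (h : StepsN P j (x₁ ++ x₂) y) :
    ∃ j₁ j₂ y₁ y₂, StepsN P j₁ x₁ y₁ ∧ StepsN P j₂ x₂ y₂ ∧ j = j₁ + j₂ ∧ y = y₁ ++ y₂ := by
  induction j generalizing x₁ x₂ with
  | zero => exact ⟨0, 0, x₁, x₂, rfl, rfl, rfl, h.symm⟩
  | succ j ih =>
    obtain ⟨z, hz, hs⟩ := h
    rcases rStep_append hz with ⟨z₁, h₁, rfl⟩ | ⟨z₂, h₂, rfl⟩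
    · obtain ⟨j₁, j₂, y₁, y₂, hs₁, hs₂, rfl, rfl⟩ := ih hs
      exact ⟨j₁ + 1, j₂, y₁, y₂, ⟨_, h₁, hs₁⟩, hs₂, by omega, rfl⟩
    · obtain ⟨j₁, j₂, y₁, y₂, hs₁, hs₂, rfl, rfl⟩ := ih hs
      exact ⟨j₁, j₂ + 1, y₁, y₂, hs₁, ⟨_, h₂, hs₂⟩, by omega, rfl⟩

lemma StepsNB.stepsN {b j : ℕ} {x y : SForm T} (h : StepsNB P b j x y) : StepsN P j x y := by
  induction j generalizing x with
  | zero => exact h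
  | succ j ih =>
    obtain ⟨z, hz, _, hs⟩ := h
    exact ⟨z, hz, ih hs⟩

lemma StepsNB.trans {b i j : ℕ} {x y z : SForm T} (h₁ : StepsNB P b i x y)
    (h₂ : StepsNB P b j y z) : StepsNB P b (i + j) x z := by
  induction i generalizing x with
  | zero => rwa [Nat.zero_add, show x = y from h₁]
  | succ i ih =>
    obtain ⟨w, hw, hb, hs⟩ := h₁
    rw [Nat.succ_add]
    exact ⟨w, hw, hb, ih hs⟩

lemma StepsNB.context {b b' j : ℕ} {x y : SForm T} (h : StepsNB P b j x y) (u v : SForm T)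
    (hb : ntCount u + b + ntCount v ≤ b') : StepsNB P b' j (u ++ x ++ v) (u ++ y ++ v) := by
  induction j generalizing x with
  | zero => exact congrArg (u ++ · ++ v) h
  | succ j ih =>
    obtain ⟨z, ⟨r, hr, u', v', rfl, rfl⟩, hz, hs⟩ := h
    refine ⟨_, ⟨r, hr, u ++ u', v' ++ v, by simp, rfl⟩, ?_, ?_⟩
    · simp only [ntCount_append] at hz ⊢
      omega
    · simpa using ih hs

lemma StepsNB.rStep_end {b j : ℕ} {x y z : SForm T} (h : StepsNB P b j x y) (hyz : RStep P y z)
    (hz : ntCount z ≤ b) : StepsNB P b (j + 1) x z :=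
  h.trans ⟨z, hyz, hz, rfl⟩

/-- The component `P` deterministically turns `x` into `z`: it can do so in exactly `n` steps
with at most `b` nonterminals in every form, no derivation from `x` is longer, and `z` is the only
form that is reached after `n` steps or in which `P` gets stuck. -/
structure RunsTo (P : List (Rule T)) (b n : ℕ) (x z : SForm T) : Prop where
  stuck : Stuck P z
  ntCount_le : ntCount x ≤ b
  stepsNB : StepsNB P b n x z
  le : ∀ j y, StepsN P j x y → j ≤ n
  unique : ∀ j y, StepsN P j x y → j = n ∨ Stuck P y → y = z

lemma Stuck.runsTo {x : SForm T} (h : Stuck P x) : RunsTo P (ntCount x) 0 x x where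
  stuck := h
  ntCount_le := le_rfl
  stepsNB := rfl
  le _ _ hs := (h.eq_of_stepsN hs).1.le
  unique _ _ hs _ := (h.eq_of_stepsN hs).2

lemma StepsNB.ntCount_le {b j : ℕ} {x y : SForm T} (h : StepsNB P b j x y) (hx : ntCount x ≤ b) :
    ntCount y ≤ b := by
  induction j generalizing x with
  | zero => exact h ▸ hx
  | succ j ih =>
    obtain ⟨z, _, hz, hs⟩ := h
    exact ih hs hz

namespace RunsTo

variable {b b₁ b₂ n n₁ n₂ : ℕ} {x x₁ x₂ z z₁ z₂ : SForm T}

lemma mono (h : RunsTo P b₁ n x z) (hb : b₁ ≤ b₂) : RunsTo P b₂ n x z where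
  __ := h
  ntCount_le := h.ntCount_le.trans hb
  stepsNB := by simpa using h.stepsNB.context [] [] (by simpa [ntCount] using hb)

lemma append (h₁ : RunsTo P b₁ n₁ x₁ z₁) (h₂ : RunsTo P b₂ n₂ x₂ z₂) :
    RunsTo P (b₁ + b₂) (n₁ + n₂) (x₁ ++ x₂) (z₁ ++ z₂) where
  stuck := stuck_append.2 ⟨h₁.stuck, h₂.stuck⟩
  ntCount_le := by simpa using add_le_add h₁.ntCount_le h₂.ntCount_le
  stepsNB := by
    have hz₁ := h₁.stepsNB.ntCount_le h₁.ntCount_le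
    have hx₂ := h₂.ntCount_le
    have s₁ := h₁.stepsNB.context (b' := b₁ + b₂) [] x₂ (by simp [ntCount] at *; omega)
    have s₂ := h₂.stepsNB.context (b' := b₁ + b₂) z₁ [] (by simp [ntCount] at *; omega)
    simp only [List.nil_append, List.append_nil] at s₁ s₂
    exact s₁.trans s₂
  le j y hs := by
    obtain ⟨j₁, j₂, y₁, y₂, hs₁, hs₂, rfl, rfl⟩ := hs.append_split
    exact add_le_add (h₁.le _ _ hs₁) (h₂.le _ _ hs₂)
  unique j y hs hj := by
    obtain ⟨j₁, j₂, y₁, y₂, hs₁, hs₂, rfl, rfl⟩ := hs.append_split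
    have le₁ := h₁.le _ _ hs₁
    have le₂ := h₂.le _ _ hs₂
    rw [h₁.unique _ _ hs₁ (hj.imp (by omega) fun h => (stuck_append.1 h).1),
      h₂.unique _ _ hs₂ (hj.imp (by omega) fun h => (stuck_append.1 h).2)]

lemma cons_step {X : ℕ} {w : SForm T} (h : RunsTo P b n w z) (hX : (X, w) ∈ P)
    (hP : ∀ r ∈ P, r.1 = X → r.2 = w) (hb : 1 ≤ b) : RunsTo P b (n + 1) [Sum.inl X] z := by
  have first : ∀ {y}, RStep P [Sum.inl X] y → y = w := by
    rintro y ⟨r, hr, u, v, hx, rfl⟩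
    obtain ⟨rfl, hXr, rfl⟩ : u = [] ∧ r.1 = X ∧ v = [] := by
      simpa [List.singleton_eq_append_iff] using hx
    simpa using hP r hr hXr
  refine ⟨h.stuck, hb, ⟨w, ⟨_, hX, [], [], rfl, by simp⟩, h.ntCount_le, h.stepsNB⟩, ?_, ?_⟩
  · rintro (_ | j) y hs
    · omega
    · obtain ⟨y', hy', hs⟩ := hs
      exact Nat.succ_le_succ (h.le _ _ (first hy' ▸ hs))
  · rintro (_ | j) y hs hj
    · obtain rfl : [Sum.inl X] = y := hs
      rcases hj with hj | hj
      · omega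
      · exact absurd (List.mem_singleton_self _) (hj _ hX)
    · obtain ⟨y', hy', hs⟩ := hs
      exact h.unique _ _ (first hy' ▸ hs) (hj.imp_left (by omega))

end RunsTo

end Derivations

/-! ### Separated grammars -/

/-- A rule of a separated grammar: in state `src`, replace `lhs` by `rhs` and enter `tgt`. -/
structure SepRule (Q T : Type) where
  src : Q
  lhs : ℕ
  rhs : SForm T
  tgt : Q

/-- A separated grammar of index at most `m`, the common normal form of programmed grammars and
CD grammar systems of finite index: the state determines the whole string of nonterminals
(its *frontier*), and these nonterminals are pairwise distinct. -/
structure SepGrammar (Q T : Type) (m : ℕ) where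
  nRules : ℕ
  rule : Fin nRules → SepRule Q T
  init : Q
  start : ℕ
  frontier : Q → List ℕ
  frontier_init : frontier init = [start]
  frontier_rule : ∀ i, ∃ l₁ l₂, frontier (rule i).src = l₁ ++ (rule i).lhs :: l₂ ∧
    frontier (rule i).tgt = l₁ ++ nts (rule i).rhs ++ l₂
  nodup_frontier : ∀ q, (frontier q).Nodup
  length_frontier_le : ∀ q, (frontier q).length ≤ m
  src_ne_tgt : ∀ i, (rule i).src ≠ (rule i).tgt
  eq_init_of_start_mem : ∀ q, start ∈ frontier q → q = init

namespace SepGrammar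

variable {Q : Type} {m : ℕ} (G : SepGrammar Q T m)

/-- A separated grammar without erasing rules. -/
def LamFree : Prop := ∀ i, (G.rule i).rhs ≠ []

/-- One step of a separated grammar on pairs (state, sentential form). -/
def Step (c d : Q × SForm T) : Prop :=
  ∃ i u v, c = ((G.rule i).src, u ++ Sum.inl (G.rule i).lhs :: v) ∧
    d = ((G.rule i).tgt, u ++ (G.rule i).rhs ++ v)

/-- The configurations reachable from the start symbol in the initial state. -/
def Reach (c : Q × SForm T) : Prop :=
  Relation.ReflTransGen G.Step (G.init, [Sum.inl G.start]) c

/-- The nonterminals present besides the one that the rule `i` rewrites. -/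
def others (i : Fin G.nRules) : List ℕ :=
  (G.frontier (G.rule i).src).filter (· ≠ (G.rule i).lhs)

/-- The language of a separated grammar; every state is accepting. -/
def lang : Set (List T) := {w | ∃ q, G.Reach (q, w.map Sum.inr)}

variable {G}

lemma lhs_mem_frontier_src (i : Fin G.nRules) :
    (G.rule i).lhs ∈ G.frontier (G.rule i).src := by
  obtain ⟨l₁, l₂, h, -⟩ := G.frontier_rule i
  simp [h]

@[simp] lemma mem_others {i : Fin G.nRules} {a : ℕ} :
    a ∈ G.others i ↔ a ∈ G.frontier (G.rule i).src ∧ a ≠ (G.rule i).lhs := by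
  simp [others]

lemma mem_others_of_mem {i : Fin G.nRules} {u v : SForm T}
    (hx : nts (u ++ Sum.inl (G.rule i).lhs :: v) = G.frontier (G.rule i).src) (a : ℕ)
    (ha : a ∈ nts u ∨ a ∈ nts v) : a ∈ G.others i := by
  have hnodup := hx ▸ G.nodup_frontier (G.rule i).src
  rw [nts_append, nts_cons_inl] at hx hnodup
  rw [List.nodup_middle, List.nodup_cons, List.mem_append] at hnodup
  refine mem_others.2 ⟨hx ▸ ?_, fun h => hnodup.1 (h ▸ ha)⟩
  rw [List.mem_append, List.mem_cons]
  exact ha.imp_right .inr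

lemma Step.nts_eq_frontier {c d : Q × SForm T} (h : G.Step c d) (hc : nts c.2 = G.frontier c.1) :
    nts d.2 = G.frontier d.1 := by
  obtain ⟨i, u, v, rfl, rfl⟩ := h
  obtain ⟨l₁, l₂, hsrc, htgt⟩ := G.frontier_rule i
  have hsplit : nts u ++ (G.rule i).lhs :: nts v = l₁ ++ (G.rule i).lhs :: l₂ := by
    simpa [hsrc] using hc
  obtain ⟨hu, hv⟩ := eq_and_eq_of_append_cons_eq
    (by simpa [← hc] using G.nodup_frontier (G.rule i).src) hsplit
  simp [htgt, hu, hv]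

lemma Reach.nts_eq_frontier {c : Q × SForm T} (h : G.Reach c) : nts c.2 = G.frontier c.1 := by
  induction h with
  | refl => exact G.frontier_init.symm
  | tail _ hstep ih => exact hstep.nts_eq_frontier ih

lemma Reach.tail {c d : Q × SForm T} (h : G.Reach c) (hstep : G.Step c d) : G.Reach d :=
  Relation.ReflTransGen.tail h hstep

lemma Reach.ntCount_le {c : Q × SForm T} (h : G.Reach c) : ntCount c.2 ≤ m := by
  rw [ntCount_eq_length_nts, h.nts_eq_frontier]
  exact G.length_frontier_le c.1

lemma one_le (G : SepGrammar Q T m) : 1 ≤ m := Reach.ntCount_le (G := G) .refl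

end SepGrammar

/-! ### From separated grammars to programmed grammars -/

lemma PG.langB_subset_lang (G : PG T) (m : ℕ) : G.langB m ⊆ G.lang := by
  rintro w ⟨r₁, r₂, -, h⟩
  exact ⟨r₁, r₂, Relation.ReflTransGen.mono (fun _ _ h => h.1) _ _ h⟩

namespace SepGrammar

variable {Q : Type} {m : ℕ} (G : SepGrammar Q T m)

/-- The programmed grammar whose labels are the rules of `G`; the success fields follow the states.
Once no nonterminal is left every successor is allowed, since a derivation of a programmed grammar
ends in some label. -/
def toPG : PG T where
  start := G.start
  nLab := G.nRules
  rule i := ((G.rule i).lhs, (G.rule i).rhs)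
  succ i := {j | (G.rule j).src = (G.rule i).tgt ∨ G.frontier (G.rule i).tgt = []}
  fail _ := ∅

lemma exists_reach_of_toPG {i₀ : Fin G.nRules} {p : SForm T × Fin G.nRules}
    (h : Relation.ReflTransGen G.toPG.PStep ([Sum.inl G.start], i₀) p) :
    ∃ q, G.Reach (q, p.1) ∧ ((G.rule p.2).lhs ∈ nts p.1 → q = (G.rule p.2).src) := by
  induction h with
  | refl =>
    refine ⟨G.init, .refl, fun h => ?_⟩
    obtain h : (G.rule i₀).lhs = G.start := by simpa using h
    exact (G.eq_init_of_start_mem _ (h ▸ lhs_mem_frontier_src i₀)).symm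
  | @tail p p' _ hstep ih =>
    obtain ⟨q, hq, hsrc⟩ := ih
    obtain ⟨u, v, hp, hp', hsucc⟩ | ⟨-, -, ⟨⟩⟩ := hstep
    obtain rfl : q = (G.rule p.2).src := hsrc (by rw [hp]; simp [toPG])
    have hreach : G.Reach ((G.rule p.2).tgt, p'.1) :=
      hq.tail ⟨p.2, u, v, Prod.ext rfl hp, Prod.ext rfl hp'⟩
    refine ⟨_, hreach, fun h => ?_⟩
    rcases hsucc with hsrc' | hnil
    · exact hsrc'.symm
    · rw [hreach.nts_eq_frontier, hnil] at h
      exact absurd h List.not_mem_nil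

lemma Reach.toPG {c : Q × SForm T} (h : G.Reach c) (j : Fin G.nRules)
    (hj : (G.rule j).src = c.1 ∨ G.frontier c.1 = []) :
    ∃ i, Relation.ReflTransGen (fun p q => G.toPG.PStep p q ∧ ntCount q.1 ≤ m)
      ([Sum.inl G.start], i) (c.2, j) := by
  induction h generalizing j with
  | refl => exact ⟨j, .refl⟩
  | tail hc hstep ih =>
    have hd := Reach.ntCount_le (Reach.tail hc hstep)
    obtain ⟨k, u, v, rfl, rfl⟩ := hstep
    obtain ⟨i, hi⟩ := ih k (.inl rfl)
    exact ⟨i, hi.tail ⟨.inl ⟨u, v, rfl, rfl, hj⟩, hd⟩⟩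

lemma toPG_lang_subset : G.toPG.lang ⊆ G.lang := by
  rintro w ⟨r₁, r₂, h⟩
  obtain ⟨q, hq, -⟩ := G.exists_reach_of_toPG h
  exact ⟨q, hq⟩

lemma lang_subset_toPG_langB : G.lang ⊆ G.toPG.langB m := by
  rintro w ⟨q, hq⟩
  obtain heq | ⟨-, -, i, -⟩ := Relation.ReflTransGen.cases_tail hq
  · exact absurd (congrArg Prod.snd heq).symm (singleton_inl_ne_map_inr _ _)
  · obtain ⟨r₁, hr₁⟩ := hq.toPG G i (.inr (by simpa using hq.nts_eq_frontier.symm))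
    exact ⟨r₁, i, G.one_le, hr₁⟩

end SepGrammar

/-! ### From controlled grammars to separated grammars -/

/-- Context-free rules applied under a control by states: `trans q r q' n` allows the rule `r` to
be applied in state `q`, entering state `q'`, if `n` is the string of nonterminals of the form
produced. Looking at `n` is what makes it possible to tell whether a component is still
applicable. -/
structure ControlledGrammar (Q T : Type) where
  rules : List (Rule T)
  trans : Q → Rule T → Q → List ℕ → Prop
  init : Q
  start : ℕ

lemma finite_setOf_length_le_of_forall_mem {α : Type} {A : Set α} (hA : A.Finite) (n : ℕ) :
    {l : List α | l.length ≤ n ∧ ∀ a ∈ l, a ∈ A}.Finite := by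
  have := hA.to_subtype
  refine ((List.finite_length_le A n).image (List.map (↑))).subset ?_
  rintro l ⟨hn, hl⟩
  lift l to List A using hl
  exact ⟨l, by simpa using hn, rfl⟩

lemma finite_setOf_rename_eq (g : ℕ → ℕ) {A : Set ℕ} (hA : A.Finite) (z : SForm T) :
    {x : SForm T | rename g x = z ∧ ∀ a ∈ nts x, a ∈ A}.Finite := by
  have hsymb : (Sum.inl '' A ∪ {s | s ∈ z} : Set (Symb T)).Finite :=
    (hA.image _).union (List.finite_toSet z)
  refine (finite_setOf_length_le_of_forall_mem hsymb z.length).subset ?_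
  rintro x ⟨rfl, hx⟩
  refine ⟨by simp [rename], ?_⟩
  rintro (a | c) hs
  · exact .inl ⟨a, hx a (mem_nts.2 hs), rfl⟩
  · exact .inr (List.mem_map_of_mem (f := Sum.map g id) hs)

/-- The nonterminal of which `e` is a copy: copies of `a` are coded as pairs `(i, a)`. -/
def base (e : ℕ) : ℕ := e.unpair.2

@[simp] lemma base_pair (i a : ℕ) : base (Nat.pair i a) = a := by simp [base]

lemma exists_pair_notMem {M : ℕ} {U : List ℕ} (hU : U.length < M) (a : ℕ) :
    ∃ i, 1 ≤ i ∧ i ≤ M ∧ Nat.pair i a ∉ U := by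
  by_contra! H
  have hsub : (Finset.Icc 1 M).image (Nat.pair · a) ⊆ U.toFinset := by
    intro e he
    obtain ⟨i, hi, rfl⟩ := Finset.mem_image.1 he
    rw [Finset.mem_Icc] at hi
    exact List.mem_toFinset.2 (H i hi.1 hi.2)
  have hcard := Finset.card_le_card hsub
  rw [Finset.card_image_of_injective _ fun i j h => (Nat.pair_eq_pair.1 h).1] at hcard
  have := List.toFinset_card_le U
  simp only [Nat.card_Icc, add_tsub_cancel_right] at hcard
  omega

lemma exists_fresh_copy {M : ℕ} (z : SForm T) (U : List ℕ) (hU : U.length + ntCount z ≤ M) :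
    ∃ z', rename base z' = z ∧ (nts z').Nodup ∧ (∀ e ∈ nts z', e ∉ U) ∧
      ∀ e ∈ nts z', 1 ≤ e.unpair.1 ∧ e.unpair.1 ≤ M := by
  induction z generalizing U with
  | nil => exact ⟨[], by simp⟩
  | cons s z ih =>
    rw [ntCount_eq_length_nts] at hU
    rcases s with a | c
    · rw [nts_cons_inl, List.length_cons] at hU
      obtain ⟨i, hi₁, hiM, hiU⟩ := exists_pair_notMem (M := M) (U := U) (by omega) a
      obtain ⟨z', rfl, hnd, hfresh, hidx⟩ := ih (Nat.pair i a :: U) (by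
        rw [ntCount_eq_length_nts, List.length_cons]
        omega)
      refine ⟨Sum.inl (Nat.pair i a) :: z', by simp, ?_, ?_, ?_⟩
      · exact List.nodup_cons.2 ⟨fun h => hfresh _ h List.mem_cons_self, hnd⟩
      · exact List.forall_mem_cons.2 ⟨hiU, fun e he h => hfresh e he (List.mem_cons_of_mem _ h)⟩
      · exact List.forall_mem_cons.2 ⟨by simp [hi₁, hiM], hidx⟩
    · obtain ⟨z', rfl, h⟩ := ih U (by rwa [nts_cons_inr, ← ntCount_eq_length_nts] at hU)
      exact ⟨Sum.inr c :: z', rfl, h⟩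

namespace ControlledGrammar

variable {Q : Type} (C : ControlledGrammar Q T) (m : ℕ)

/-- One step of a controlled grammar, producing at most `m` nonterminals. -/
def Step (c d : Q × SForm T) : Prop :=
  ∃ r ∈ C.rules, ∃ u v, c.2 = u ++ Sum.inl r.1 :: v ∧ d.2 = u ++ r.2 ++ v ∧
    C.trans c.1 r d.1 (nts d.2) ∧ ntCount d.2 ≤ m

/-- The configurations reachable through forms with at most `m` nonterminals. -/
def Reach (c : Q × SForm T) : Prop :=
  Relation.ReflTransGen (C.Step m) (C.init, [Sum.inl C.start]) c

/-- The words derivable through forms with at most `m` nonterminals; every state is accepting. -/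
def lang : Set (List T) := {w | ∃ q, C.Reach m (q, w.map Sum.inr)}

/-- The nonterminals that can occur in a derivation. -/
def alphabet : Set ℕ := {a | a = C.start ∨ ∃ r ∈ C.rules, a ∈ nts r.2}

/-- The nonterminals of the separated grammar. A step needs at most `m` copies disjoint from the at
most `m` copies present; index `0` is reserved for the start symbol. -/
def copies : Set ℕ := {e | e.unpair.1 ≤ 2 * m ∧ base e ∈ C.alphabet}

lemma finite_copies : (C.copies m).Finite := by
  have halph : C.alphabet.Finite := by
    refine ((Set.finite_singleton C.start).union <|
      (List.finite_toSet C.rules).biUnion fun r _ => List.finite_toSet (nts r.2)).subset ?_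
    rintro a (rfl | ⟨r, hr, ha⟩)
    · exact .inl rfl
    · exact .inr (Set.mem_biUnion hr ha)
  refine (((Set.finite_Iic (2 * m)).prod halph).image fun p => Nat.pair p.1 p.2).subset ?_
  exact fun e he => ⟨e.unpair, he, Nat.pair_unpair e⟩

/-- A control state paired with a frontier that may occur in the separated grammar. -/
structure IsConf (p : Q × List ℕ) : Prop where
  nodup : p.2.Nodup
  length_le : p.2.length ≤ m
  mem_copies : ∀ e ∈ p.2, e ∈ C.copies m
  eq_init : Nat.pair 0 C.start ∈ p.2 → p = (C.init, [Nat.pair 0 C.start])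

/-- The states of the separated grammar. -/
abbrev SepState : Type := {p : Q × List ℕ // C.IsConf m p}

instance [Finite Q] : Finite (C.SepState m) := by
  refine Set.Finite.to_subtype ((Set.finite_univ.prod
    (finite_setOf_length_le_of_forall_mem (C.finite_copies m) m)).subset ?_)
  exact fun p hp => ⟨trivial, hp.length_le, hp.mem_copies⟩

/-- The rules of the separated grammar: all copies of rules of `C` that respect the frontiers. -/
def sepRules : Set (SepRule (C.SepState m) T) :=
  {r | (∃ l₁ l₂, r.src.1.2 = l₁ ++ r.lhs :: l₂ ∧ r.tgt.1.2 = l₁ ++ nts r.rhs ++ l₂) ∧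
    r.src ≠ r.tgt ∧ (base r.lhs, rename base r.rhs) ∈ C.rules ∧
    C.trans r.src.1.1 (base r.lhs, rename base r.rhs) r.tgt.1.1 (r.tgt.1.2.map base)}

section SepRules

variable {C} {m}

lemma IsConf.replace {q q' : Q} {l₁ l l₂ : List ℕ} {e : ℕ} (h : C.IsConf m (q, l₁ ++ e :: l₂))
    (hnd : l.Nodup) (hfresh : ∀ a ∈ l, a ∉ l₁ ++ e :: l₂) (hidx : ∀ a ∈ l, 1 ≤ a.unpair.1)
    (hcop : ∀ a ∈ l, a ∈ C.copies m) (hlen : (l₁ ++ l ++ l₂).length ≤ m) :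
    C.IsConf m (q', l₁ ++ l ++ l₂) where
  nodup := by
    have hold : (l₁ ++ l₂).Nodup := (List.nodup_middle.1 h.nodup).of_cons
    have hdisj : ∀ a ∈ l, a ∉ l₁ ∧ a ∉ l₂ := fun a ha => by
      have := hfresh a ha
      simp_all
    simp only [List.nodup_append] at hold ⊢
    grind
  length_le := hlen
  mem_copies a ha := by
    have := h.mem_copies a
    simp only [List.mem_append, List.mem_cons] at ha this
    rcases ha with (ha | ha) | ha
    exacts [this (.inl ha), hcop a ha, this (.inr (.inr ha))]
  eq_init hS := by
    have hlen₁ (hmem : Nat.pair 0 C.start ∈ l₁ ∨ Nat.pair 0 C.start ∈ l₂) : False := by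
      have hsing := congrArg (List.length ∘ Prod.snd)
        (h.eq_init (by simp only [List.mem_append, List.mem_cons]; tauto))
      rcases hmem with hmem | hmem <;> have := List.length_pos_of_mem hmem <;>
        simp at hsing <;> omega
    simp only [List.mem_append] at hS
    rcases hS with (hS | hS) | hS
    · exact (hlen₁ (.inl hS)).elim
    · simpa using hidx _ hS
    · exact (hlen₁ (.inr hS)).elim

lemma exists_sepRule {s : C.SepState m} {q' : Q} {r : Rule T} {u v : SForm T} {e : ℕ}
    (hr : r ∈ C.rules) (he : base e = r.1) (hs : nts (u ++ Sum.inl e :: v) = s.1.2)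
    (htrans : C.trans s.1.1 r q' (nts (rename base u ++ r.2 ++ rename base v)))
    (hle : ntCount (rename base u ++ r.2 ++ rename base v) ≤ m) :
    ∃ r' ∈ C.sepRules m, r'.src = s ∧ r'.lhs = e ∧ rename base r'.rhs = r.2 ∧ r'.tgt.1.1 = q' := by
  obtain ⟨⟨q, l⟩, hconf⟩ := s
  obtain rfl : nts u ++ e :: nts v = l := by simpa using hs
  have hroom : (nts u ++ e :: nts v).length + ntCount r.2 ≤ 2 * m := by
    have := hconf.length_le
    simp only [ntCount_append] at hle this
    omega
  obtain ⟨z, hz, hnd, hfresh, hidx⟩ := exists_fresh_copy r.2 _ hroom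
  have hcop : ∀ a ∈ nts z, a ∈ C.copies m := fun a ha =>
    ⟨(hidx a ha).2, .inr ⟨r, hr, by simpa [← hz] using ⟨a, by simpa using ha, rfl⟩⟩⟩
  have hconf' : C.IsConf m (q', nts u ++ nts z ++ nts v) :=
    hconf.replace hnd hfresh (fun a ha => (hidx a ha).1) hcop (by
      simpa [ntCount_eq_length_nts, ← hz] using hle)
  have hne : nts u ++ e :: nts v ≠ nts u ++ nts z ++ nts v := fun h => by
    have hmem : e ∈ nts u ++ nts z ++ nts v := h ▸ by simp
    have := (List.nodup_middle.1 hconf.nodup).notMem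
    have := fun he => hfresh e he (by simp)
    simp_all
  have hr' : (base e, rename base z) = r := Prod.ext he hz
  refine ⟨⟨⟨_, hconf⟩, e, z, ⟨_, hconf'⟩⟩, ⟨⟨_, _, rfl, rfl⟩, ?_, ?_, ?_⟩, rfl, rfl, hz, rfl⟩
  · exact fun h => hne (congrArg (fun s : C.SepState m => s.1.2) h)
  · rwa [hr']
  · rw [hr']
    simpa [← hz] using htrans

end SepRules

instance [Finite Q] : Finite (C.sepRules m) := by
  have hcop := C.finite_copies m
  have hrhs := (List.finite_toSet C.rules).biUnion
    fun r _ => finite_setOf_rename_eq base hcop r.2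
  refine Set.Finite.to_subtype (((Set.finite_univ.prod (hcop.prod (hrhs.prod
    Set.finite_univ))).image fun p => ⟨p.1, p.2.1, p.2.2.1, p.2.2.2⟩).subset ?_)
  rintro ⟨src, lhs, rhs, tgt⟩ ⟨⟨l₁, l₂, hsrc, htgt⟩, -, hr, -⟩
  refine ⟨(src, lhs, rhs, tgt), ⟨trivial, src.2.mem_copies _ (by simp_all), ?_, trivial⟩, rfl⟩
  exact Set.mem_biUnion hr ⟨rfl, fun e he => tgt.2.mem_copies _ (by simp_all)⟩

variable {m} in
/-- The separated grammar of a controlled grammar: nonterminals are replaced by pairwise distinct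
copies, and the states record them. -/
noncomputable def toSep [Finite Q] (hm : 1 ≤ m) : SepGrammar (C.SepState m) T m where
  nRules := Nat.card (C.sepRules m)
  rule i := ((Finite.equivFin (C.sepRules m)).symm i).1
  init := ⟨(C.init, [Nat.pair 0 C.start]),
    List.nodup_singleton _, by simpa, by simp [copies, alphabet], fun _ => rfl⟩
  start := Nat.pair 0 C.start
  frontier s := s.1.2
  frontier_init := rfl
  frontier_rule i := ((Finite.equivFin (C.sepRules m)).symm i).2.1
  nodup_frontier s := s.2.nodup
  length_frontier_le s := s.2.length_le
  src_ne_tgt i := ((Finite.equivFin (C.sepRules m)).symm i).2.2.1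
  eq_init_of_start_mem s h := Subtype.ext (s.2.eq_init h)

section toSep

variable {C} {m} [Finite Q] {hm : 1 ≤ m}

lemma toSep_step_iff {c d : C.SepState m × SForm T} :
    (C.toSep hm).Step c d ↔ ∃ r ∈ C.sepRules m, ∃ u v,
      c = (r.src, u ++ Sum.inl r.lhs :: v) ∧ d = (r.tgt, u ++ r.rhs ++ v) := by
  constructor
  · rintro ⟨i, h⟩
    exact ⟨_, ((Finite.equivFin (C.sepRules m)).symm i).2, h⟩
  · rintro ⟨r, hr, h⟩
    refine ⟨Finite.equivFin (C.sepRules m) ⟨r, hr⟩, ?_⟩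
    rwa [show (C.toSep hm).rule (Finite.equivFin (C.sepRules m) ⟨r, hr⟩) = r from
      congrArg Subtype.val (Equiv.symm_apply_apply _ _)]

lemma toSep_lamFree (hC : ∀ r ∈ C.rules, r.2 ≠ []) : (C.toSep hm).LamFree := fun i h =>
  hC _ ((Finite.equivFin (C.sepRules m)).symm i).2.2.2.1 (rename_eq_nil.2 h)

lemma reach_of_toSep {c : C.SepState m × SForm T} (h : (C.toSep hm).Reach c) :
    C.Reach m (c.1.1.1, rename base c.2) := by
  induction h with
  | refl =>
    rw [rename_cons_inl, rename_nil, show base (C.toSep hm).start = C.start from base_pair _ _]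
    exact .refl
  | tail hc hstep ih =>
    have hd := SepGrammar.Reach.tail hc hstep
    obtain ⟨r, ⟨-, -, hr, htrans⟩, u, v, rfl, rfl⟩ := toSep_step_iff.1 hstep
    refine ih.tail ⟨_, hr, rename base u, rename base v, by simp, by simp, ?_, ?_⟩
    · rw [nts_rename, hd.nts_eq_frontier]
      exact htrans
    · rw [ntCount_rename]
      exact hd.ntCount_le

lemma Reach.toSep {c : Q × SForm T} (h : C.Reach m c) :
    ∃ (s : C.SepState m) (x : SForm T),
      (C.toSep hm).Reach (s, x) ∧ s.1.1 = c.1 ∧ rename base x = c.2 := by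
  induction h with
  | refl =>
    exact ⟨(C.toSep hm).init, _, .refl, rfl, congrArg (fun a => [Sum.inl a]) (base_pair _ _)⟩
  | @tail c d _ hstep ih =>
    obtain ⟨s, x, hx, hs, hxc⟩ := ih
    obtain ⟨r, hr, u, v, hc, hd, htrans, hle⟩ := hstep
    obtain ⟨u, e, v, rfl, he, rfl, rfl⟩ := rename_eq_append_cons (hxc.trans hc)
    rw [hd] at htrans hle
    obtain ⟨r', hr', rfl, rfl, hrhs, htgt⟩ :=
      exists_sepRule hr he hx.nts_eq_frontier (hs ▸ htrans) hle
    have hstep' := (toSep_step_iff (hm := hm)).2 ⟨r', hr', u, v, rfl, rfl⟩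
    exact ⟨r'.tgt, u ++ r'.rhs ++ v, hx.tail hstep', htgt, by simp [hd, hrhs]⟩

lemma toSep_lang : (C.toSep hm).lang = C.lang m := by
  ext w
  constructor
  · rintro ⟨s, hs⟩
    have hreach := reach_of_toSep hs
    rw [rename_map_inr] at hreach
    exact ⟨_, hreach⟩
  · rintro ⟨q, hq⟩
    obtain ⟨s, x, hx, -, hxw⟩ := hq.toSep (hm := hm)
    exact ⟨s, rename_eq_map_inr hxw ▸ hx⟩

end toSep

end ControlledGrammar

/-! ### From programmed grammars to controlled grammars -/

namespace PG

variable (G : PG T)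

/-- The controlled grammar of a programmed grammar without appearance checking. The state is the
label to be applied next, `none` standing for the free choice of the first label. -/
def toControlled : ControlledGrammar (Option (Fin G.nLab)) T where
  rules := (List.finRange G.nLab).map G.rule
  trans q r q' _ := ∃ i j, (q = none ∨ q = some i) ∧ G.rule i = r ∧ q' = some j ∧ j ∈ G.succ i
  init := none
  start := G.start

variable {G} {m : ℕ}

lemma toControlled_reach (hG : G.NoAC) {i₀ : Fin G.nLab} {p : SForm T × Fin G.nLab}
    (h : Relation.ReflTransGen (fun p q => G.PStep p q ∧ ntCount q.1 ≤ m)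
      ([Sum.inl G.start], i₀) p) :
    ∃ q, (q = none ∨ q = some p.2) ∧ G.toControlled.Reach m (q, p.1) := by
  induction h with
  | refl => exact ⟨none, .inl rfl, .refl⟩
  | @tail p p' _ hstep ih =>
    obtain ⟨q, hq, hreach⟩ := ih
    obtain ⟨⟨u, v, hp, hp', hsucc⟩ | ⟨-, -, hfail⟩, hle⟩ := hstep
    · refine ⟨some p'.2, .inr rfl, hreach.tail ⟨G.rule p.2, ?_, u, v, hp, hp', ?_, hle⟩⟩
      · simp [toControlled]
      · exact ⟨p.2, p'.2, hq, rfl, rfl, hsucc⟩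
    · rw [hG] at hfail
      exact hfail.elim

lemma reach_of_toControlled {c : Option (Fin G.nLab) × SForm T} (h : G.toControlled.Reach m c)
    (i : Fin G.nLab) (hi : c.1 = none ∨ c.1 = some i) :
    ∃ i₀, Relation.ReflTransGen (fun p q => G.PStep p q ∧ ntCount q.1 ≤ m)
      ([Sum.inl G.start], i₀) (c.2, i) := by
  induction h generalizing i with
  | refl => exact ⟨i, .refl⟩
  | tail _ hstep ih =>
    obtain ⟨r, -, u, v, hc, hd, ⟨j, j', hq, rfl, hq', hsucc⟩, hle⟩ := hstep
    obtain rfl : j' = i := by simpa [hq'] using hi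
    obtain ⟨i₀, hi₀⟩ := ih j hq
    exact ⟨i₀, hi₀.tail ⟨.inl ⟨u, v, hc, hd, hsucc⟩, hle⟩⟩

lemma toControlled_lang (hG : G.NoAC) (hm : 1 ≤ m) : G.toControlled.lang m = G.langB m := by
  ext w
  constructor
  · rintro ⟨q, hq⟩
    obtain heq | ⟨_, -, _, -, _, _, -, -, ⟨_, j, -, -, hj, -⟩, -⟩ :=
      Relation.ReflTransGen.cases_tail hq
    · exact absurd (congrArg Prod.snd heq).symm (singleton_inl_ne_map_inr _ _)
    · obtain ⟨i₀, hi₀⟩ := reach_of_toControlled hq j (.inr hj)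
      exact ⟨i₀, j, hm, hi₀⟩
  · rintro ⟨i₀, i, -, h⟩
    obtain ⟨q, -, hq⟩ := toControlled_reach hG h
    exact ⟨q, hq⟩

end PG

/-! ### From CD grammar systems to controlled grammars -/

/-- The number of steps up to which a mode has to count: from there on all numbers of steps are
equivalent for it. -/
def Mode.cap : Mode → ℕ
  | .eq k => k + 1
  | .le k => k + 1
  | .ge k => k
  | .star => 0
  | .t => 0
  | .conj f g => max f.cap g.cap

lemma modeOK_congr {P : List (Rule T)} {f : Mode} {j j' : ℕ} {y y' : SForm T}
    (hj : min j f.cap = min j' f.cap) (hy : nts y = nts y') :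
    modeOK P f j y ↔ modeOK P f j' y' := by
  induction f with
  | eq k => simp only [Mode.cap, modeOK] at *; omega
  | le k => simp only [Mode.cap, modeOK] at *; omega
  | ge k => simp only [Mode.cap, modeOK] at *; omega
  | star => rfl
  | t => simp only [modeOK, ← stuck_iff_not_exists_rStep, Stuck, ← mem_nts, hy]
  | conj f g ihf ihg =>
    simp only [Mode.cap] at hj
    exact and_congr (ihf (by omega)) (ihg (by omega))

/-- The number of steps made so far, as far as it matters for the mode `f`. -/
def Mode.count (f : Mode) (j : ℕ) : Fin (f.cap + 1) := ⟨min j f.cap, by omega⟩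

lemma Mode.count_eq_count_iff {f : Mode} {j j' : ℕ} :
    f.count j = f.count j' ↔ min j f.cap = min j' f.cap :=
  Fin.mk_eq_mk

lemma Mode.count_succ_congr {f : Mode} {j j' : ℕ} (h : f.count j = f.count j') :
    f.count (j + 1) = f.count (j' + 1) := by
  rw [Mode.count_eq_count_iff] at h ⊢
  omega

namespace CDGS

lemma langB_subset_lang (G : CDGS T) (f : Mode) (m : ℕ) : G.langB f m ⊆ G.lang f := by
  rintro w ⟨-, h⟩
  exact Relation.TransGen.mono (fun _ _ ⟨i, j, hs, hok⟩ => ⟨i, j, hs.stepsN, hok⟩) _ _ h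

lemma mem_langB_iff {G : CDGS T} {f : Mode} {m : ℕ} (hm : 1 ≤ m) {w : List T} :
    w ∈ G.langB f m ↔
      Relation.ReflTransGen (G.ModeStepB f m) [Sum.inl G.start] (w.map Sum.inr) := by
  refine ⟨fun h => h.2.to_reflTransGen, fun h => ⟨hm, ?_⟩⟩
  exact (Relation.reflTransGen_iff_eq_or_transGen.1 h).resolve_left
    fun h => singleton_inl_ne_map_inr _ _ h.symm

variable (G : CDGS T) (f : Mode) {m : ℕ}

/-- The controlled grammar of a CD grammar system working in mode `f`. The state is the component at
work and its (capped) number of steps, or `none` between two turns. -/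
def toControlled : ControlledGrammar (Option (Fin G.deg × Fin (f.cap + 1))) T where
  rules := (List.finRange G.deg).flatMap G.comp
  trans q r q' n := ∃ i j, (q = none ∧ j = 0 ∨ q = some (i, f.count j)) ∧ r ∈ G.comp i ∧
    (q' = none ∧ modeOK (G.comp i) f (j + 1) (n.map Sum.inl) ∨
      q' = some (i, f.count (j + 1)) ∧ n ≠ [])
  init := none
  start := G.start

variable {G f}

lemma exists_turn_of_toControlled {c : Option (Fin G.deg × Fin (f.cap + 1)) × SForm T}
    (h : (G.toControlled f).Reach m c) :
    ∃ x, Relation.ReflTransGen (G.ModeStepB f m) [Sum.inl G.start] x ∧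
      (c.1 = none ∧ c.2 = x ∨
        ∃ i j, c.1 = some (i, f.count j) ∧ StepsNB (G.comp i) m j x c.2 ∧ nts c.2 ≠ []) := by
  induction h with
  | refl => exact ⟨_, .refl, .inl ⟨rfl, rfl⟩⟩
  | @tail c d _ hstep ih =>
    obtain ⟨x, hx, hturn⟩ := ih
    obtain ⟨r, -, u, v, hc, hd, ⟨i, j, hq, hr, hq'⟩, hle⟩ := hstep
    obtain ⟨j', hj', hs⟩ : ∃ j', f.count j' = f.count j ∧ StepsNB (G.comp i) m j' x c.2 := by
      rcases hturn with ⟨hnone, rfl⟩ | ⟨i', j', hsome, hs, -⟩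
      · obtain rfl : j = 0 := by simpa [hnone] using hq
        exact ⟨0, rfl, rfl⟩
      · obtain ⟨rfl, hj'⟩ : i' = i ∧ f.count j' = f.count j := by simpa [hsome] using hq
        exact ⟨j', hj', hs⟩
    have hs' := hs.rStep_end ⟨r, hr, u, v, hc, hd⟩ hle
    have hcount := Mode.count_succ_congr hj'
    rcases hq' with ⟨hq', hok⟩ | ⟨hq', hne⟩
    · have hok' := (modeOK_congr (Mode.count_eq_count_iff.1 hcount) (nts_map_inl _).symm).2 hok
      exact ⟨d.2, hx.tail ⟨i, _, hs', hok'⟩, .inl ⟨hq', rfl⟩⟩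
    · exact ⟨x, hx, .inr ⟨i, j' + 1, hcount ▸ hq', hs', hne⟩⟩

lemma toControlled_reach_turn {i : Fin G.deg} {q : Option (Fin G.deg × Fin (f.cap + 1))}
    {j n : ℕ} {x y : SForm T} (hq : q = none ∧ j = 0 ∨ q = some (i, f.count j))
    (hx : (G.toControlled f).Reach m (q, x)) (hs : StepsNB (G.comp i) m (n + 1) x y)
    (hok : modeOK (G.comp i) f (j + n + 1) y) : (G.toControlled f).Reach m (none, y) := by
  have hrules {r : Rule T} (hr : r ∈ G.comp i) : r ∈ (G.toControlled f).rules :=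
    List.mem_flatMap.2 ⟨i, List.mem_finRange i, hr⟩
  induction n generalizing q j x with
  | zero =>
    obtain ⟨_, ⟨r, hr, u, v, hxr, hzr⟩, hle, rfl⟩ := hs
    refine hx.tail ⟨r, hrules hr, u, v, hxr, hzr, ⟨i, j, hq, hr, .inl ⟨rfl, ?_⟩⟩, hle⟩
    exact (modeOK_congr rfl (by simp)).1 hok
  | succ n ih =>
    obtain ⟨z, ⟨r, hr, u, v, hxr, hzr⟩, hle, hs⟩ := hs
    have hne : nts z ≠ [] := by
      obtain ⟨_, ⟨r', -, u', v', rfl, -⟩, -⟩ := hs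
      simp
    refine ih (.inr rfl) (hx.tail ⟨r, hrules hr, u, v, hxr, hzr, ?_, hle⟩) hs
      (by rwa [show j + 1 + n + 1 = j + (n + 1) + 1 by omega])
    exact ⟨i, j, hq, hr, .inr ⟨rfl, hne⟩⟩

lemma toControlled_reach {x : SForm T}
    (h : Relation.ReflTransGen (G.ModeStepB f m) [Sum.inl G.start] x) :
    (G.toControlled f).Reach m (none, x) := by
  induction h with
  | refl => exact .refl
  | tail _ hstep ih =>
    obtain ⟨i, _ | n, hs, hok⟩ := hstep
    · exact (show _ = _ from hs) ▸ ih
    · exact toControlled_reach_turn (.inl ⟨rfl, rfl⟩) ih hs (by rwa [Nat.zero_add])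

lemma toControlled_lang (hm : 1 ≤ m) : (G.toControlled f).lang m = G.langB f m := by
  ext w
  rw [mem_langB_iff hm]
  constructor
  · rintro ⟨q, hq⟩
    obtain ⟨x, hx, ⟨-, rfl⟩ | ⟨i, j, -, -, hne⟩⟩ := exists_turn_of_toControlled hq
    · exact hx
    · exact absurd (nts_map_inr w) hne
  · exact fun h => ⟨none, toControlled_reach h⟩

end CDGS

/-! ### The family of languages of separated grammars -/

/-- The languages generated by finite-state separated grammars of index at most `m`; `lf = true`
forbids erasing rules. -/
def SepFamInd (T : Type) (lf : Bool) (m : ℕ) : Set (Set (List T)) :=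
  {L | ∃ (Q : Type) (_ : Finite Q) (G : SepGrammar Q T m), (lf = true → G.LamFree) ∧ EqL G.lang L}

lemma ControlledGrammar.mem_sepFamInd {Q : Type} [Finite Q] (C : ControlledGrammar Q T) {m : ℕ}
    (hm : 1 ≤ m) {lf : Bool} (hlf : lf = true → ∀ r ∈ C.rules, r.2 ≠ []) {L : Set (List T)}
    (hL : EqL (C.lang m) L) : L ∈ SepFamInd T lf m :=
  ⟨C.SepState m, inferInstance, C.toSep hm, fun h => toSep_lamFree (hlf h), by rwa [toSep_lang]⟩

theorem pFamInd_eq_sepFamInd (lf : Bool) {m : ℕ} (hm : 1 ≤ m) :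
    PFamInd T lf false m = SepFamInd T lf m := by
  ext L
  constructor
  · rintro ⟨G, hlf, hac, hL, hind⟩
    refine G.toControlled.mem_sepFamInd hm (fun h r hr => ?_) ?_
    · obtain ⟨i, -, rfl⟩ := List.mem_map.1 hr
      exact hlf h i
    · rwa [PG.toControlled_lang (hac rfl) hm, (G.langB_subset_lang m).antisymm hind]
  · rintro ⟨Q, _, G, hlf, hL⟩
    have hle := G.lang_subset_toPG_langB.trans (G.toPG.langB_subset_lang m)
    refine ⟨G.toPG, hlf, fun _ _ => rfl, ?_, G.toPG_lang_subset.trans G.lang_subset_toPG_langB⟩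
    rwa [G.toPG_lang_subset.antisymm hle]

theorem cdFamIndInf_subset_sepFamInd (lf : Bool) (f : Mode) {m : ℕ} (hm : 1 ≤ m) :
    CDFamIndInf T lf f m ⊆ SepFamInd T lf m := by
  rintro L ⟨G, hlf, hL, hind⟩
  refine (G.toControlled f).mem_sepFamInd hm (fun h r hr => ?_) ?_
  · obtain ⟨i, -, hi⟩ := List.mem_flatMap.1 hr
    exact hlf h i r hi
  · rwa [CDGS.toControlled_lang hm, (G.langB_subset_lang f m).antisymm hind]

/-! ### Tagged nonterminals and rule chains -/

section Tagged

variable {Tag : Type} [Encodable Tag]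

/-- The nonterminal `a` decorated with the tag `t`. -/
def tagged (a : ℕ) (t : Tag) : ℕ := Nat.pair 0 (Nat.pair a (Encodable.encode t))

/-- Auxiliary nonterminals, distinct from all tagged ones. -/
def aux (i : ℕ) : ℕ := Nat.pair 1 i

@[simp] lemma tagged_inj {a b : ℕ} {t t' : Tag} : tagged a t = tagged b t' ↔ a = b ∧ t = t' := by
  simp [tagged, Nat.pair_eq_pair]

@[simp] lemma aux_inj {i j : ℕ} : aux i = aux j ↔ i = j := by
  simp [aux, Nat.pair_eq_pair]

@[simp] lemma tagged_ne_aux {a i : ℕ} {t : Tag} : tagged a t ≠ aux i := by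
  simp [tagged, aux, Nat.pair_eq_pair]

/-- The sentential form obtained by decorating every nonterminal `a` with the tag `σ a`. -/
def tag (σ : ℕ → Tag) (x : SForm T) : SForm T := rename (fun a => tagged a (σ a)) x

variable {σ σ' : ℕ → Tag} {x y : SForm T}

@[simp] lemma tag_nil : tag σ ([] : SForm T) = [] := rfl

@[simp] lemma tag_cons_inl {a : ℕ} :
    tag σ (Sum.inl a :: x) = Sum.inl (tagged a (σ a)) :: tag σ x := rfl

@[simp] lemma tag_cons_inr {c : T} : tag σ (Sum.inr c :: x) = Sum.inr c :: tag σ x := rfl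

@[simp] lemma tag_append : tag σ (x ++ y) = tag σ x ++ tag σ y := rename_append _ _ _

@[simp] lemma tag_map_inr (w : List T) : tag σ (w.map Sum.inr) = w.map Sum.inr :=
  rename_map_inr _ w

@[simp] lemma tag_eq_nil : tag σ x = [] ↔ x = [] := rename_eq_nil

@[simp] lemma ntCount_tag : ntCount (tag σ x) = ntCount x := ntCount_rename _ _

lemma tag_congr (h : ∀ a ∈ nts x, σ a = σ' a) : tag σ x = tag σ' x :=
  rename_congr fun a ha => by rw [h a ha]

@[simp] lemma inl_tagged_mem_tag {a : ℕ} {t : Tag} :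
    Sum.inl (tagged a t) ∈ tag σ x ↔ a ∈ nts x ∧ σ a = t := by
  rw [tag, inl_mem_rename, mem_nts]
  simp only [tagged_inj]
  exact ⟨fun ⟨_, hb, rfl, h⟩ => ⟨hb, h⟩, fun ⟨ha, h⟩ => ⟨a, ha, rfl, h⟩⟩

@[simp] lemma inl_aux_notMem_tag {i : ℕ} : Sum.inl (aux i) ∉ tag σ x := by
  rw [tag, inl_mem_rename]
  rintro ⟨a, -, h⟩
  exact tagged_ne_aux h

/-- The chain `X → aux k → ⋯ → aux 1 → Z` of `k + 1` rules. -/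
def chain : ℕ → ℕ → SForm T → List (Rule T)
  | 0, X, Z => [(X, Z)]
  | k + 1, X, Z => (X, [Sum.inl (aux (k + 1))]) :: chain k (aux (k + 1)) Z

lemma lhs_of_mem_chain {k X : ℕ} {Z : SForm T} {r : Rule T} (hr : r ∈ chain k X Z) :
    r.1 = X ∨ ∃ i, 1 ≤ i ∧ i ≤ k ∧ r.1 = aux i := by
  induction k generalizing X with
  | zero =>
    obtain rfl := List.mem_singleton.1 hr
    exact .inl rfl
  | succ k ih =>
    obtain rfl | hr := List.mem_cons.1 hr
    · exact .inl rfl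
    · obtain h | ⟨i, hi₁, hi, h⟩ := ih hr
      · exact .inr ⟨k + 1, by omega, le_rfl, h⟩
      · exact .inr ⟨i, hi₁, by omega, h⟩

lemma rhs_ne_nil_of_mem_chain {k X : ℕ} {Z : SForm T} (hZ : Z ≠ []) {r : Rule T}
    (hr : r ∈ chain k X Z) : r.2 ≠ [] := by
  induction k generalizing X with
  | zero =>
    obtain rfl := List.mem_singleton.1 hr
    exact hZ
  | succ k ih =>
    obtain rfl | hr := List.mem_cons.1 hr
    · exact List.cons_ne_nil _ _
    · exact ih hr

lemma chain_runsTo {P : List (Rule T)} {k X : ℕ} {Z : SForm T} (hchain : chain k X Z ⊆ P)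
    (hP : ∀ r ∈ P, (r.1 = X ∨ ∃ i, 1 ≤ i ∧ i ≤ k ∧ r.1 = aux i) → r ∈ chain k X Z)
    (hX : ∀ i, 1 ≤ i → i ≤ k → X ≠ aux i) (hZ : Stuck P Z) :
    RunsTo P (max 1 (ntCount Z)) (k + 1) [Sum.inl X] Z := by
  induction k generalizing X with
  | zero =>
    refine (hZ.runsTo.mono (le_max_right _ _)).cons_step (hchain (by simp [chain])) ?_
      (le_max_left _ _)
    intro r hr hrX
    rw [List.mem_singleton.1 (hP r hr (.inl hrX))]
  | succ k ih =>
    refine RunsTo.cons_step (w := [Sum.inl (aux (k + 1))]) (ih ?_ ?_ ?_)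
      (hchain (by simp [chain])) ?_ (le_max_left _ _)
    · exact fun r hr => hchain (List.mem_cons_of_mem _ hr)
    · intro r hr hlhs
      obtain ⟨i, hi₁, hik, hi⟩ : ∃ i, 1 ≤ i ∧ i ≤ k + 1 ∧ r.1 = aux i := by
        rcases hlhs with h | ⟨i, hi₁, hik, hi⟩
        exacts [⟨k + 1, by omega, le_rfl, h⟩, ⟨i, hi₁, by omega, hi⟩]
      obtain rfl | h := List.mem_cons.1 (hP r hr (.inr ⟨i, hi₁, hik, hi⟩))
      exacts [absurd hi (hX i hi₁ hik), h]
    · intro i _ hik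
      rw [Ne, aux_inj]
      omega
    · intro r hr hrX
      obtain rfl | h := List.mem_cons.1 (hP r hr (.inl hrX))
      · rfl
      · obtain h | ⟨i, hi₁, hik, hi⟩ := lhs_of_mem_chain h
        exacts [absurd (hrX.symm.trans h) (hX _ (by omega) le_rfl),
          absurd (hrX.symm.trans hi) (hX i hi₁ (by omega))]

lemma chain_append_runsTo {k a : ℕ} {t : Tag} {Z : SForm T} {E : List (Rule T)}
    (hE : ∀ r ∈ E, ∃ b t', r.1 = tagged b t' ∧ (b, t') ≠ (a, t))
    (hZ : Stuck (chain k (tagged a t) Z ++ E) Z) :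
    RunsTo (chain k (tagged a t) Z ++ E) (max 1 (ntCount Z)) (k + 1)
      [Sum.inl (tagged a t)] Z := by
  refine chain_runsTo (List.subset_append_left _ _) ?_ (fun i _ _ => tagged_ne_aux) hZ
  intro r hr hlhs
  refine (List.mem_append.1 hr).resolve_right fun hrE => ?_
  obtain ⟨b, t', hb, hne⟩ := hE r hrE
  simp_all [Prod.ext_iff]

end Tagged

/-! ### From separated grammars to CD grammar systems: counting modes -/

/-- In the mode `f` a turn of `K` steps is always allowed, and a shorter one never is. -/
def Mode.ForcesSteps (T : Type) (f : Mode) (K : ℕ) : Prop :=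
  ∀ (P : List (Rule T)) (y : SForm T), modeOK P f K y ∧ ∀ j, modeOK P f j y → K ≤ j

namespace SepGrammar

variable {Q : Type} {m : ℕ} {G : SepGrammar Q T m}

lemma lang_subset_langB {Tag : Type} [Encodable Tag] {H : CDGS T} {f : Mode} (τ : Q → Tag)
    (hstart : H.start = tagged G.start (τ G.init))
    (hstep : ∀ c d, G.Reach c → G.Step c d → Relation.ReflTransGen (H.ModeStepB f m)
      (tag (fun _ => τ c.1) c.2) (tag (fun _ => τ d.1) d.2)) :
    G.lang ⊆ H.langB f m := by
  rintro w ⟨q, hq⟩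
  have key : ∀ c, G.Reach c → Relation.ReflTransGen (H.ModeStepB f m) [Sum.inl H.start]
      (tag (fun _ => τ c.1) c.2) := fun c hc => by
    induction hc with
    | refl => exact hstart ▸ .refl
    | tail hc hcd ih => exact ih.trans (hstep _ _ hc hcd)
  exact (CDGS.mem_langB_iff G.one_le).2 (by simpa only [tag_map_inr] using key _ hq)

variable [Encodable Q]

variable (G) in
/-- The component of the rule `i` for a counting mode: it replaces the state in the tags of all
nonterminals, the chain being long enough to make this take exactly `K` steps. -/
def countingComp (K : ℕ) (i : Fin G.nRules) : List (Rule T) :=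
  chain (K - (G.frontier (G.rule i).src).length) (tagged (G.rule i).lhs (G.rule i).src)
      (tag (fun _ => (G.rule i).tgt) (G.rule i).rhs) ++
    (G.others i).map fun a =>
      (tagged a (G.rule i).src, [Sum.inl (tagged a (G.rule i).tgt)])

variable (G) in
/-- The CD grammar system of a separated grammar for counting modes. -/
def countingSystem (K : ℕ) : CDGS T where
  deg := G.nRules
  start := tagged G.start G.init
  comp := G.countingComp K

variable {K : ℕ}

lemma countingSystem_lamFree (hG : G.LamFree) : (G.countingSystem K).LamFree := by
  intro i r hr
  rcases List.mem_append.1 hr with hr | hr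
  · exact rhs_ne_nil_of_mem_chain (tag_eq_nil.not.2 (hG i)) hr
  · obtain ⟨a, -, rfl⟩ := List.mem_map.1 hr
    exact List.cons_ne_nil _ _

lemma stuck_countingComp {i : Fin G.nRules} {q : Q} (hq : q ≠ (G.rule i).src) (x : SForm T) :
    Stuck (G.countingComp K i) (tag (fun _ => q) x) := by
  intro r hr
  rcases List.mem_append.1 hr with hr | hr
  · obtain h | ⟨j, -, -, h⟩ := lhs_of_mem_chain hr <;> simp [h, hq]
  · obtain ⟨a, -, rfl⟩ := List.mem_map.1 hr
    simp [hq]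

lemma countingComp_runsTo_retag {i : Fin G.nRules} {x : SForm T}
    (hx : ∀ a ∈ nts x, a ∈ G.others i) :
    RunsTo (G.countingComp K i) (ntCount x) (ntCount x)
      (tag (fun _ => (G.rule i).src) x) (tag (fun _ => (G.rule i).tgt) x) := by
  have hstuck := stuck_countingComp (K := K) (G.src_ne_tgt i).symm
  induction x with
  | nil => exact (hstuck []).runsTo
  | cons s x ih =>
    rcases s with a | c
    · obtain ⟨ha, hx⟩ := List.forall_mem_cons.1 hx
      have hmem : (tagged a (G.rule i).src, [Sum.inl (tagged a (G.rule i).tgt)]) ∈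
          G.countingComp K i := by
        simp [countingComp, mem_others.1 ha]
      have huniq : ∀ r ∈ G.countingComp K i, r.1 = tagged a (G.rule i).src →
          r.2 = [Sum.inl (tagged a (G.rule i).tgt)] := by
        intro r hr hra
        rcases List.mem_append.1 hr with hr | hr
        · obtain h | ⟨j, -, -, h⟩ := lhs_of_mem_chain hr
          · simp_all
          · exact absurd (hra.symm.trans h) tagged_ne_aux
        · obtain ⟨b, -, rfl⟩ := List.mem_map.1 hr
          simp_all
      have hrun := ((hstuck [Sum.inl a]).runsTo.cons_step hmem huniq le_rfl).append (ih hx)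
      simpa [ntCount_eq_length_nts, Nat.add_comm] using hrun
    · have hrun := (hstuck [Sum.inr c]).runsTo.append (ih hx)
      simpa [ntCount_eq_length_nts] using hrun

lemma countingComp_runsTo_lhs (i : Fin G.nRules) :
    RunsTo (G.countingComp K i) (max 1 (ntCount (G.rule i).rhs))
      (K - (G.frontier (G.rule i).src).length + 1)
      [Sum.inl (tagged (G.rule i).lhs (G.rule i).src)]
      (tag (fun _ => (G.rule i).tgt) (G.rule i).rhs) := by
  have hstuck := stuck_countingComp (K := K) (G.src_ne_tgt i).symm (G.rule i).rhs
  rw [← ntCount_tag (σ := fun _ => (G.rule i).tgt)]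
  refine chain_append_runsTo (fun r hr => ?_) hstuck
  obtain ⟨a, ha, rfl⟩ := List.mem_map.1 hr
  exact ⟨a, _, rfl, by simpa using (mem_others.1 ha).2⟩

lemma countingComp_runsTo (hmK : m ≤ K) {i : Fin G.nRules} {u v : SForm T}
    (hx : nts (u ++ Sum.inl (G.rule i).lhs :: v) = G.frontier (G.rule i).src) :
    RunsTo (G.countingComp K i) m K
      (tag (fun _ => (G.rule i).src) (u ++ Sum.inl (G.rule i).lhs :: v))
      (tag (fun _ => (G.rule i).tgt) (u ++ (G.rule i).rhs ++ v)) := by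
  have hy : nts (u ++ (G.rule i).rhs ++ v) = G.frontier (G.rule i).tgt :=
    Step.nts_eq_frontier ⟨i, u, v, rfl, rfl⟩ hx
  have hlen_src := hx ▸ G.length_frontier_le (G.rule i).src
  have hlen_tgt := hy ▸ G.length_frontier_le (G.rule i).tgt
  have hothers := mem_others_of_mem hx
  have hu : RunsTo (G.countingComp K i) _ _ (tag _ u) (tag _ u) :=
    countingComp_runsTo_retag fun a ha => hothers a (.inl ha)
  have hv : RunsTo (G.countingComp K i) _ _ (tag _ v) (tag _ v) :=
    countingComp_runsTo_retag fun a ha => hothers a (.inr ha)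
  have hlhs := countingComp_runsTo_lhs (K := K) i
  have hrun := (hu.append hlhs).append hv
  rw [← hx] at hrun
  simp only [nts_append, nts_cons_inl, List.length_append, List.length_cons,
    ← ntCount_eq_length_nts] at hlen_src hlen_tgt hrun
  convert hrun.mono (b₂ := m) (by omega) using 1
  · omega
  · simp
  · simp

lemma countingSystem_reach_inv (hmK : m ≤ K) {f : Mode} (hf : f.ForcesSteps T K) {y : SForm T}
    (h : Relation.ReflTransGen ((G.countingSystem K).ModeStep f)
      [Sum.inl (G.countingSystem K).start] y) :
    ∃ c, G.Reach c ∧ y = tag (fun _ => c.1) c.2 := by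
  induction h with
  | refl => exact ⟨_, .refl, rfl⟩
  | tail _ hstep ih =>
    obtain ⟨⟨q, x⟩, hc, rfl⟩ := ih
    obtain ⟨i, j, hs, hok⟩ := hstep
    by_cases hq : q = (G.rule i).src
    · subst hq
      have hx : nts x = G.frontier (G.rule i).src := hc.nts_eq_frontier
      obtain ⟨l₁, l₂, hsrc, -⟩ := G.frontier_rule i
      obtain ⟨u, v, rfl, -⟩ := nts_eq_append_cons (hx.trans hsrc)
      have hrun := countingComp_runsTo hmK hx
      have hjK : j = K := (hrun.le _ _ hs).antisymm ((hf _ _).2 _ hok)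
      exact ⟨_, hc.tail ⟨i, u, v, rfl, rfl⟩, hrun.unique _ _ hs (.inl hjK)⟩
    · exact ⟨_, hc, ((stuck_countingComp hq x).eq_of_stepsN hs).2⟩

lemma countingSystem_lang_subset (hmK : m ≤ K) {f : Mode} (hf : f.ForcesSteps T K) :
    (G.countingSystem K).lang f ⊆ G.lang := by
  intro w hw
  obtain ⟨c, hc, hwc⟩ := countingSystem_reach_inv hmK hf hw.to_reflTransGen
  exact ⟨c.1, rename_eq_map_inr hwc.symm ▸ hc⟩

lemma lang_subset_countingSystem_langB (hmK : m ≤ K) {f : Mode} (hf : f.ForcesSteps T K) :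
    G.lang ⊆ (G.countingSystem K).langB f m := by
  refine lang_subset_langB (fun q => q) rfl ?_
  rintro c d hc ⟨i, u, v, rfl, rfl⟩
  have hrun := countingComp_runsTo hmK hc.nts_eq_frontier
  exact .single ⟨i, K, hrun.stepsNB, (hf _ _).1⟩

end SepGrammar

theorem sepFamInd_subset_of_forcesSteps {lf : Bool} {m K : ℕ} (hmK : m ≤ K) {f : Mode}
    (hf : f.ForcesSteps T K) : SepFamInd T lf m ⊆ CDFamIndInf T lf f m := by
  rintro L ⟨Q, _, G, hlf, hL⟩
  have := Encodable.ofCountable Q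
  have hsub := G.countingSystem_lang_subset hmK hf
  have hsup := G.lang_subset_countingSystem_langB hmK hf
  refine ⟨G.countingSystem K, fun h => SepGrammar.countingSystem_lamFree (hlf h), ?_,
    hsub.trans hsup⟩
  rwa [hsub.antisymm (hsup.trans (CDGS.langB_subset_lang _ _ _))]

/-! ### From separated grammars to CD grammar systems: terminating modes -/

/-- In the mode `f` a turn of `k + 1` steps that runs until the component is stuck is allowed, and
every allowed turn runs until the component is stuck. -/
def Mode.ForcesTermination (T : Type) (f : Mode) (k : ℕ) : Prop :=
  ∀ (P : List (Rule T)) (y : SForm T),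
    (Stuck P y → modeOK P f (k + 1) y) ∧ ∀ j, modeOK P f j y → Stuck P y

/-- A rule on tagged nonterminals with forbidding context: `lhs` tagged `src` is replaced by `rhs`
tagged `tgt`, provided that no tagged nonterminal listed in `guard` is present. -/
structure GuardedRule (Tag T : Type) where
  lhs : ℕ
  src : Tag
  rhs : SForm T
  tgt : Tag
  guard : List (ℕ × Tag)
  lhs_notMem_guard : (lhs, src) ∉ guard
  rhs_notMem_guard : ∀ b, (b, tgt) ∉ guard
  src_ne_tgt : src ≠ tgt

/-- Change the tag of the nonterminals in `l` to `t`. -/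
def retag {Tag : Type} (σ : ℕ → Tag) (l : List ℕ) (t : Tag) (a : ℕ) : Tag :=
  if a ∈ l then t else σ a

section Retag

variable {Tag : Type} {σ : ℕ → Tag} {l : List ℕ} {t : Tag} {a : ℕ}

lemma retag_of_mem (h : a ∈ l) : retag σ l t a = t := if_pos h

lemma retag_of_notMem (h : a ∉ l) : retag σ l t a = σ a := if_neg h

lemma retag_nil : retag σ [] t = σ := funext fun _ => if_neg List.not_mem_nil

lemma retag_retag_singleton : retag (retag σ l t) [a] t = retag σ (a :: l) t := by
  funext b
  by_cases hb : b = a <;> simp [retag, hb]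

lemma retag_eq_or (σ : ℕ → Tag) (l : List ℕ) (t : Tag) (a : ℕ) :
    retag σ l t a = t ∨ retag σ l t a = σ a := by
  by_cases h : a ∈ l
  exacts [.inl (retag_of_mem h), .inr (retag_of_notMem h)]

variable [Encodable Tag]

lemma tag_append_tag_append_tag {u z v : SForm T} (h : (nts (u ++ z ++ v)).Nodup) :
    tag σ u ++ tag (fun _ => t) z ++ tag σ v = tag (retag σ (nts z) t) (u ++ z ++ v) := by
  rw [nts_append, nts_append, List.nodup_append, List.nodup_append] at h
  obtain ⟨⟨-, -, huz⟩, -, huzv⟩ := h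
  rw [tag_append, tag_append, tag_congr (x := u) fun a ha => (retag_of_notMem ?_).symm,
    tag_congr (x := z) fun a ha => (retag_of_mem ha).symm,
    tag_congr (x := v) fun a ha => (retag_of_notMem ?_).symm]
  · exact fun hz => huzv a (List.mem_append_right _ hz) a ha rfl
  · exact fun hz => huz a ha a hz rfl

lemma reflTransGen_retag {R : SForm T → SForm T → Prop} {x : SForm T} (hl : l.Nodup)
    (step : ∀ a l', a ∉ l' → a :: l' ⊆ l →
      R (tag (retag σ l' t) x) (tag (retag σ (a :: l') t) x)) :
    Relation.ReflTransGen R (tag σ x) (tag (retag σ l t) x) := by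
  induction l with
  | nil => rw [retag_nil]
  | cons a l ih =>
    obtain ⟨ha, hl⟩ := List.nodup_cons.1 hl
    exact (ih hl fun b l' hb h => step b l' hb (List.subset_cons_of_subset _ h)).tail
      (step a l ha (List.Subset.refl _))

end Retag

namespace GuardedRule

variable {Tag : Type} (r : GuardedRule Tag T)

/-- Applicability of a guarded rule to a form `x` tagged by `σ`, with tagged result `y`. -/
def Fires [Encodable Tag] (σ : ℕ → Tag) (x y : SForm T) : Prop :=
  (∀ b ∈ nts x, (b, σ b) ∉ r.guard) ∧ σ r.lhs = r.src ∧ ∃ u v, x = u ++ Sum.inl r.lhs :: v ∧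
    y = tag σ u ++ tag (fun _ => r.tgt) r.rhs ++ tag σ v

/-- The component simulating a guarded rule in `k + 1` steps. Present guard symbols are sent to
the trap symbol `aux 0`, which is never rewritten. -/
def component [Encodable Tag] (k : ℕ) : List (Rule T) :=
  chain k (tagged r.lhs r.src) (tag (fun _ => r.tgt) r.rhs) ++
    r.guard.map fun p => (tagged p.1 p.2, [Sum.inl (aux 0)])

variable [Encodable Tag] {r} {k : ℕ} {σ : ℕ → Tag} {x y : SForm T}

lemma rhs_ne_nil_of_mem_component (hr : r.rhs ≠ []) {p : Rule T} (hp : p ∈ r.component k) :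
    p.2 ≠ [] := by
  rcases List.mem_append.1 hp with hp | hp
  · exact rhs_ne_nil_of_mem_chain (tag_eq_nil.not.2 hr) hp
  · obtain ⟨b, -, rfl⟩ := List.mem_map.1 hp
    exact List.cons_ne_nil _ _

lemma lhs_ne_trap {p : Rule T} (hp : p ∈ r.component k) : p.1 ≠ aux 0 := by
  rcases List.mem_append.1 hp with hp | hp
  · obtain h | ⟨i, hi, -, h⟩ := lhs_of_mem_chain hp <;> simp only [h, ne_eq, tagged_ne_aux,
      aux_inj, not_false_eq_true]
    omega
  · obtain ⟨b, -, rfl⟩ := List.mem_map.1 hp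
    exact tagged_ne_aux

lemma stuck_component (hlhs : ∀ a ∈ nts x, a = r.lhs → σ a ≠ r.src)
    (hguard : ∀ b ∈ nts x, (b, σ b) ∉ r.guard) : Stuck (r.component k) (tag σ x) := by
  intro p hp
  rcases List.mem_append.1 hp with hp | hp
  · obtain h | ⟨i, -, -, h⟩ := lhs_of_mem_chain hp
    · rw [h, inl_tagged_mem_tag]
      exact fun ⟨ha, hσ⟩ => hlhs _ ha rfl hσ
    · exact h ▸ inl_aux_notMem_tag
  · obtain ⟨⟨b, t⟩, hb, rfl⟩ := List.mem_map.1 hp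
    rw [inl_tagged_mem_tag]
    exact fun ⟨hbx, ht⟩ => hguard b hbx (by rwa [ht])

lemma component_runsTo_rhs :
    RunsTo (r.component k) (max 1 (ntCount r.rhs)) (k + 1) [Sum.inl (tagged r.lhs r.src)]
      (tag (fun _ => r.tgt) r.rhs) := by
  rw [← ntCount_tag (σ := fun _ => r.tgt)]
  refine chain_append_runsTo (fun p hp => ?_)
    (stuck_component (fun _ _ _ => r.src_ne_tgt.symm) fun b _ => r.rhs_notMem_guard b)
  obtain ⟨⟨b, t⟩, hb, rfl⟩ := List.mem_map.1 hp
  exact ⟨b, t, rfl, fun h => r.lhs_notMem_guard (h ▸ hb)⟩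

lemma Fires.runsTo (h : r.Fires σ x y) (hx : (nts x).Nodup) {m : ℕ} (hxm : ntCount x ≤ m)
    (hym : ntCount y ≤ m) : RunsTo (r.component k) m (k + 1) (tag σ x) y := by
  obtain ⟨hguard, hsrc, u, v, rfl, rfl⟩ := h
  rw [nts_append, nts_cons_inl] at hx hguard
  rw [List.nodup_middle, List.nodup_cons, List.mem_append, not_or] at hx
  obtain ⟨⟨hu, hv⟩, -⟩ := hx
  simp only [List.mem_append, List.mem_cons] at hguard
  have hu : Stuck (r.component k) (tag σ u) :=
    stuck_component (fun a ha h => absurd (h ▸ ha) hu) fun b hb => hguard b (.inl hb)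
  have hv : Stuck (r.component k) (tag σ v) :=
    stuck_component (fun a ha h => absurd (h ▸ ha) hv) fun b hb => hguard b (.inr (.inr hb))
  have hrun := (hu.runsTo.append (component_runsTo_rhs (r := r))).append hv.runsTo
  rw [List.append_cons, ntCount_append, ntCount_append, ntCount_singleton] at hxm
  simp only [ntCount_append, ntCount_tag] at hym hrun
  convert hrun.mono (b₂ := m) (by omega) using 1
  · omega
  · simp [hsrc]

lemma trap_mem_of_guard {j b : ℕ} (hb : b ∈ nts x) (hguard : (b, σ b) ∈ r.guard)
    (hs : StepsN (r.component k) j (tag σ x) y) (hy : Stuck (r.component k) y) :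
    Sum.inl (aux 0) ∈ y := by
  obtain ⟨u, v, rfl⟩ := List.append_of_mem (mem_nts.1 hb)
  have htrap : Stuck (r.component k) [Sum.inl (aux 0)] := fun p hp h =>
    lhs_ne_trap hp (by simpa using h)
  have hrun : RunsTo (r.component k) 1 1 [Sum.inl (tagged b (σ b))] [Sum.inl (aux 0)] := by
    refine htrap.runsTo.cons_step (List.mem_append_right _ (List.mem_map_of_mem hguard)) ?_ le_rfl
    intro p hp hpb
    rcases List.mem_append.1 hp with hp | hp
    · obtain h | ⟨i, -, -, h⟩ := lhs_of_mem_chain hp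
      · obtain ⟨rfl, ht⟩ := tagged_inj.1 (hpb.symm.trans h)
        exact absurd (ht ▸ hguard) r.lhs_notMem_guard
      · exact absurd (hpb.symm.trans h) tagged_ne_aux
    · obtain ⟨_, -, rfl⟩ := List.mem_map.1 hp
      rfl
  rw [tag_append, tag_cons_inl, List.append_cons, List.append_assoc] at hs
  obtain ⟨_, _, y₁, _, -, hs₁, -, rfl⟩ := hs.append_split
  obtain ⟨_, _, y₂, y₃, hs₂, -, -, rfl⟩ := hs₁.append_split
  obtain rfl := hrun.unique _ _ hs₂ (.inr (stuck_append.1 (stuck_append.1 hy).2).1)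
  simp

lemma trap_mem_or_eq_or_fires {j : ℕ} (hx : (nts x).Nodup)
    (hs : StepsN (r.component k) j (tag σ x) y) (hy : Stuck (r.component k) y) :
    Sum.inl (aux 0) ∈ y ∨ y = tag σ x ∨ r.Fires σ x y := by
  by_cases hguard : ∃ b ∈ nts x, (b, σ b) ∈ r.guard
  · obtain ⟨b, hb, hbg⟩ := hguard
    exact .inl (trap_mem_of_guard hb hbg hs hy)
  push Not at hguard
  by_cases hlhs : r.lhs ∈ nts x ∧ σ r.lhs = r.src
  · obtain ⟨u, v, huv⟩ := List.append_of_mem (mem_nts.1 hlhs.1)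
    have hfires : r.Fires σ x _ := ⟨hguard, hlhs.2, u, v, huv, rfl⟩
    have hrun := hfires.runsTo (k := k) hx (le_max_left _ _) (le_max_right _ _)
    exact .inr (.inr (hrun.unique _ _ hs (.inr hy) ▸ hfires))
  · have hstuck : Stuck (r.component k) (tag σ x) :=
      stuck_component (fun a ha h hσ => hlhs ⟨h ▸ ha, h ▸ hσ⟩) hguard
    exact .inr (.inl (hstuck.eq_of_stepsN hs).2)

end GuardedRule

/-- The CD grammar system with one component for each guarded rule of a list. -/
def guardedSystem {Tag : Type} [Encodable Tag] (start : ℕ) (rules : List (GuardedRule Tag T))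
    (k : ℕ) : CDGS T where
  deg := rules.length
  start := start
  comp i := (rules.get i).component k

section GuardedSystem

variable {Tag : Type} [Encodable Tag] {start k m : ℕ} {rules : List (GuardedRule Tag T)}
  {f : Mode} {r : GuardedRule Tag T} {σ σ₀ : ℕ → Tag} {x x₀ y : SForm T}

lemma guardedSystem_lamFree (h : ∀ r ∈ rules, r.rhs ≠ []) :
    (guardedSystem start rules k).LamFree := fun i _ hp =>
  GuardedRule.rhs_ne_nil_of_mem_component (h _ (rules.get_mem i)) hp

lemma GuardedRule.Fires.modeStepB (hf : f.ForcesTermination T k) (hr : r ∈ rules)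
    (h : r.Fires σ x y) (hx : (nts x).Nodup) (hxm : ntCount x ≤ m) (hym : ntCount y ≤ m) :
    (guardedSystem start rules k).ModeStepB f m (tag σ x) y := by
  obtain ⟨i, rfl⟩ := List.get_of_mem hr
  have hrun := h.runsTo (k := k) hx hxm hym
  exact ⟨i, k + 1, hrun.stepsNB, (hf _ _).1 hrun.stuck⟩

lemma guardedSystem_reach_inv (hf : f.ForcesTermination T k)
    {I : (ℕ → Tag) → SForm T → Prop} (hnodup : ∀ {σ x}, I σ x → (nts x).Nodup)
    (hstep : ∀ {σ x y r}, I σ x → r ∈ rules → r.Fires σ x y → ∃ σ' x', I σ' x' ∧ y = tag σ' x')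
    (h₀ : I σ₀ x₀)
    (h : Relation.ReflTransGen ((guardedSystem start rules k).ModeStep f) (tag σ₀ x₀) y) :
    Sum.inl (aux 0) ∈ y ∨ ∃ σ x, I σ x ∧ y = tag σ x := by
  induction h with
  | refl => exact .inr ⟨_, _, h₀, rfl⟩
  | tail _ hturn ih =>
    obtain ⟨i, j, hs, hok⟩ := hturn
    obtain htrap | ⟨σ, x, hI, rfl⟩ := ih
    · exact .inl (hs.inl_mem_of_forall_ne (fun _ => GuardedRule.lhs_ne_trap) htrap)
    · obtain htrap | rfl | hfires :=
        GuardedRule.trap_mem_or_eq_or_fires (hnodup hI) hs ((hf _ _).2 _ hok)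
      exacts [.inl htrap, .inr ⟨σ, x, hI, rfl⟩, .inr (hstep hI (rules.get_mem i) hfires)]

lemma GuardedRule.fires_iff_of_rhs_eq (hr : r.rhs = [Sum.inl r.lhs]) (hx : (nts x).Nodup) :
    r.Fires σ x y ↔ (∀ b ∈ nts x, (b, σ b) ∉ r.guard) ∧ σ r.lhs = r.src ∧ r.lhs ∈ nts x ∧
      y = tag (retag σ [r.lhs] r.tgt) x := by
  have htag : ∀ u v, x = u ++ Sum.inl r.lhs :: v →
      tag σ u ++ tag (fun _ => r.tgt) r.rhs ++ tag σ v = tag (retag σ [r.lhs] r.tgt) x := by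
    rintro u v rfl
    rw [List.append_cons] at hx ⊢
    rw [hr, tag_append_tag_append_tag hx]
    rfl
  refine and_congr_right' (and_congr_right' ⟨?_, fun ⟨hmem, hy⟩ => ?_⟩)
  · rintro ⟨u, v, huv, rfl⟩
    exact ⟨by simp [huv], htag u v huv⟩
  · obtain ⟨u, v, huv⟩ := List.append_of_mem (mem_nts.1 hmem)
    exact ⟨u, v, huv, hy.trans (htag u v huv).symm⟩

end GuardedSystem

namespace SepGrammar

variable {Q : Type} {m : ℕ} (G : SepGrammar Q T m)

/-- The tags marking a nonterminal as ready for a rule other than `i`. -/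
def otherMarks (i : Fin G.nRules) : List (Q ⊕ Fin G.nRules) :=
  ((List.finRange G.nRules).filter (· ≠ i)).map Sum.inr

variable {G} in
@[simp] lemma inl_notMem_otherMarks {i : Fin G.nRules} {q : Q} :
    Sum.inl q ∉ G.otherMarks i := by
  simp [otherMarks]

variable {G} in
@[simp] lemma inr_mem_otherMarks {i j : Fin G.nRules} :
    Sum.inr j ∈ G.otherMarks i ↔ j ≠ i := by
  simp [otherMarks]

/-- Mark the nonterminal `a` as ready for the rule `i`. -/
def markRule (i : Fin G.nRules) (a : ℕ) : GuardedRule (Q ⊕ Fin G.nRules) T where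
  lhs := a
  src := .inl (G.rule i).src
  rhs := [.inl a]
  tgt := .inr i
  guard := G.frontier (G.rule i).src ×ˢ G.otherMarks i
  lhs_notMem_guard := by simp
  rhs_notMem_guard := by simp
  src_ne_tgt := Sum.inl_ne_inr

/-- Apply the rule `i`, all nonterminals besides its left-hand side being ready for it. -/
def fireRule (i : Fin G.nRules) : GuardedRule (Q ⊕ Fin G.nRules) T where
  lhs := (G.rule i).lhs
  src := .inl (G.rule i).src
  rhs := (G.rule i).rhs
  tgt := .inr i
  guard := G.others i ×ˢ (.inl (G.rule i).src :: G.otherMarks i)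
  lhs_notMem_guard := by simp
  rhs_notMem_guard := by simp
  src_ne_tgt := Sum.inl_ne_inr

/-- Replace the mark `i` of the nonterminal `a` by the new state, the rule `i` having been
applied. -/
def unmarkRule (i : Fin G.nRules) (a : ℕ) : GuardedRule (Q ⊕ Fin G.nRules) T where
  lhs := a
  src := .inr i
  rhs := [.inl a]
  tgt := .inl (G.rule i).tgt
  guard := [((G.rule i).lhs, .inl (G.rule i).src)]
  lhs_notMem_guard := by simp
  rhs_notMem_guard := by simp [(G.src_ne_tgt i).symm]
  src_ne_tgt := Sum.inr_ne_inl

/-- The guarded rules simulating a separated grammar. -/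
def guardedRules : List (GuardedRule (Q ⊕ Fin G.nRules) T) :=
  (List.finRange G.nRules).flatMap fun i =>
    G.fireRule i :: ((G.others i).map (G.markRule i) ++
      (G.frontier (G.rule i).tgt).map (G.unmarkRule i))

/-- The CD grammar system of a separated grammar for terminating modes. -/
abbrev terminatingSystem [Encodable Q] (k : ℕ) : CDGS T :=
  guardedSystem (tagged G.start (Sum.inl G.init : Q ⊕ Fin G.nRules)) G.guardedRules k

/-- The tags in state `q` while no rule is being prepared or completed. -/
abbrev stateTags (q : Q) : ℕ → Q ⊕ Fin G.nRules := fun _ => .inl q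

/-- The tags right after the application of the rule `i`. -/
abbrev firedTags (i : Fin G.nRules) : ℕ → Q ⊕ Fin G.nRules := fun _ => .inr i

/-- The tags right before the application of the rule `i`. -/
abbrev markedTags (i : Fin G.nRules) : ℕ → Q ⊕ Fin G.nRules :=
  retag (G.stateTags (G.rule i).src) (G.others i) (.inr i)

/-- The nonterminals of a form in state `q` are being marked for the rule `i`, which has not
been applied yet if `q` is its source, and has been applied if `q` is its target. -/
def Pending (i : Fin G.nRules) (q : Q) (σ : ℕ → Q ⊕ Fin G.nRules) : Prop :=
  (∀ a ∈ G.frontier q, σ a = .inl q ∨ σ a = .inr i) ∧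
    ((G.rule i).src = q ∧ σ (G.rule i).lhs = .inl q ∨ (G.rule i).tgt = q)

/-- The tags that can occur, in state `q`, without the trap symbol being present. -/
def Consistent (q : Q) (σ : ℕ → Q ⊕ Fin G.nRules) : Prop :=
  (∀ a ∈ G.frontier q, σ a = .inl q) ∨ ∃ i, G.Pending i q σ

variable {G}

lemma mem_guardedRules {r : GuardedRule (Q ⊕ Fin G.nRules) T} :
    r ∈ G.guardedRules ↔ ∃ i, r = G.fireRule i ∨
      (∃ a ∈ G.others i, r = G.markRule i a) ∨
      ∃ a ∈ G.frontier (G.rule i).tgt, r = G.unmarkRule i a := by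
  simp [guardedRules, and_assoc, eq_comm (a := r)]

lemma terminatingSystem_lamFree [Encodable Q] (hG : G.LamFree) (k : ℕ) :
    (G.terminatingSystem k).LamFree := by
  refine guardedSystem_lamFree fun r hr => ?_
  obtain ⟨i, rfl | ⟨a, -, rfl⟩ | ⟨a, -, rfl⟩⟩ := mem_guardedRules.1 hr
  exacts [hG i, List.cons_ne_nil _ _, List.cons_ne_nil _ _]

section Consistent

variable {q : Q} {σ : ℕ → Q ⊕ Fin G.nRules} {i : Fin G.nRules} {a : ℕ}

lemma Consistent.eq_of_inl (h : G.Consistent q σ) (ha : a ∈ G.frontier q) {q' : Q}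
    (hσ : σ a = .inl q') : q' = q := by
  obtain h | ⟨i, h, -⟩ := h
  · exact Sum.inl_injective (hσ.symm.trans (h a ha))
  · obtain h | h := h a ha
    · exact Sum.inl_injective (hσ.symm.trans h)
    · simp [h] at hσ

lemma Consistent.pending (h : G.Consistent q σ) (ha : a ∈ G.frontier q)
    (hσ : σ a = .inr i) : G.Pending i q σ := by
  obtain h | ⟨j, h⟩ := h
  · simp [h a ha] at hσ
  · obtain ha | ha := h.1 a ha
    · simp [ha] at hσ
    · obtain rfl := Sum.inr_injective (hσ.symm.trans ha)
      exact h

lemma Consistent.inl_or_inr (h : G.Consistent q σ) (ha : a ∈ G.frontier q) :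
    σ a = .inl q ∨ ∃ i, σ a = .inr i := by
  cases hσ : σ a with
  | inl q' => exact .inl (congrArg _ (h.eq_of_inl ha hσ))
  | inr i => exact .inr ⟨i, rfl⟩

lemma Consistent.mark (h : G.Consistent q σ) (ha : a ∈ G.frontier q)
    (hne : a ≠ (G.rule i).lhs) (hσ : σ a = .inl (G.rule i).src)
    (hguard : ∀ b ∈ G.frontier q, (b, σ b) ∉ (G.markRule i a).guard) :
    G.Consistent q (retag σ [a] (.inr i)) := by
  obtain rfl := h.eq_of_inl ha hσ
  have htags : ∀ b ∈ G.frontier (G.rule i).src, σ b = .inl (G.rule i).src ∨ σ b = .inr i := by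
    intro b hb
    obtain hb' | ⟨j, hj⟩ := h.inl_or_inr hb
    · exact .inl hb'
    · have hji : j = i := by simpa [markRule, hb, hj] using hguard b hb
      exact .inr (hji ▸ hj)
  have hlhs : σ (G.rule i).lhs = .inl (G.rule i).src := by
    refine (htags _ (lhs_mem_frontier_src i)).resolve_right fun hi => ?_
    obtain ⟨-, ⟨-, hlhs⟩ | htgt⟩ := h.pending (lhs_mem_frontier_src i) hi
    · simp [hi] at hlhs
    · exact G.src_ne_tgt i htgt.symm
  refine .inr ⟨i, fun b hb => ?_, .inl ⟨rfl, ?_⟩⟩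
  · exact (retag_eq_or σ [a] (.inr i) b).elim .inr fun hb' => hb' ▸ htags b hb
  · rwa [retag_of_notMem (by simpa using hne.symm)]

lemma Consistent.unmark (h : G.Consistent q σ) (ha : a ∈ G.frontier q) (hσ : σ a = .inr i)
    (hguard : ∀ b ∈ G.frontier q, (b, σ b) ∉ (G.unmarkRule i a).guard) :
    G.Consistent q (retag σ [a] (.inl (G.rule i).tgt)) := by
  obtain ⟨htags, ⟨rfl, hlhs⟩ | rfl⟩ := h.pending ha hσ
  · simpa [unmarkRule, hlhs] using hguard _ (lhs_mem_frontier_src i)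
  · exact .inr ⟨i, fun b hb => (retag_eq_or σ [a] _ b).elim .inl fun hb' => hb' ▸ htags b hb,
      .inr rfl⟩

lemma Consistent.eq_inr_of_fire (h : G.Consistent (G.rule i).src σ)
    (hguard : ∀ b ∈ G.frontier (G.rule i).src, (b, σ b) ∉ (G.fireRule i).guard)
    (ha : a ∈ G.others i) : σ a = .inr i := by
  obtain ⟨hmem, hne⟩ := mem_others.1 ha
  obtain hσ | ⟨j, hj⟩ := h.inl_or_inr hmem
  · simpa [fireRule, hσ, hmem, hne] using hguard a hmem
  · have hji : j = i := by simpa [fireRule, hj, hmem, hne] using hguard a hmem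
    exact hji ▸ hj

end Consistent

section Terminating

variable [Encodable Q] {k : ℕ} {f : Mode}

lemma Consistent.fire {q : Q} {σ : ℕ → Q ⊕ Fin G.nRules} {x y : SForm T} {i : Fin G.nRules}
    (hσ : G.Consistent q σ) (hx : G.Reach (q, x)) (h : (G.fireRule i).Fires σ x y) :
    ∃ x', G.Reach ((G.rule i).tgt, x') ∧ y = tag (G.firedTags i) x' := by
  obtain ⟨hguard, hlhs, u, v, rfl, rfl⟩ := h
  have hnts : nts (u ++ Sum.inl (G.rule i).lhs :: v) = G.frontier q := hx.nts_eq_frontier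
  have hmem : (G.rule i).lhs ∈ G.frontier q := by simp [← hnts]
  obtain rfl := hσ.eq_of_inl hmem hlhs
  have hothers : ∀ a, a ∈ nts u ∨ a ∈ nts v → σ a = .inr i := fun a ha =>
    hσ.eq_inr_of_fire (hnts ▸ hguard) (mem_others_of_mem hnts a ha)
  refine ⟨_, hx.tail ⟨i, u, v, rfl, rfl⟩, ?_⟩
  rw [tag_congr fun a ha => hothers a (.inl ha), tag_congr fun a ha => hothers a (.inr ha),
    tag_append, tag_append]
  rfl

lemma Consistent.exists_of_fires {q : Q} {σ : ℕ → Q ⊕ Fin G.nRules} {x y : SForm T}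
    {r : GuardedRule (Q ⊕ Fin G.nRules) T} (hσ : G.Consistent q σ) (hx : G.Reach (q, x))
    (hr : r ∈ G.guardedRules) (hfires : r.Fires σ x y) :
    ∃ σ' x', (∃ q', G.Reach (q', x') ∧ G.Consistent q' σ') ∧ y = tag σ' x' := by
  have hnts : nts x = G.frontier q := hx.nts_eq_frontier
  have hnodup : (nts x).Nodup := hnts ▸ G.nodup_frontier q
  obtain ⟨i, rfl | ⟨a, ha', rfl⟩ | ⟨a, -, rfl⟩⟩ := mem_guardedRules.1 hr
  · obtain ⟨x', hx', rfl⟩ := hσ.fire hx hfires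
    exact ⟨_, x', ⟨_, hx', .inr ⟨i, fun _ _ => .inr rfl, .inr rfl⟩⟩, rfl⟩
  · obtain ⟨hguard, hsrc, ha, rfl⟩ := (GuardedRule.fires_iff_of_rhs_eq rfl hnodup).1 hfires
    rw [hnts] at hguard ha
    exact ⟨_, x, ⟨q, hx, hσ.mark ha (mem_others.1 ha').2 hsrc hguard⟩, rfl⟩
  · obtain ⟨hguard, hsrc, ha, rfl⟩ := (GuardedRule.fires_iff_of_rhs_eq rfl hnodup).1 hfires
    rw [hnts] at hguard ha
    exact ⟨_, x, ⟨q, hx, hσ.unmark ha hsrc hguard⟩, rfl⟩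

lemma terminatingSystem_lang_subset (hf : f.ForcesTermination T k) :
    (G.terminatingSystem k).lang f ⊆ G.lang := by
  intro w hw
  obtain htrap | ⟨σ, x, ⟨q, hx, -⟩, hwx⟩ := guardedSystem_reach_inv hf
    (x₀ := [Sum.inl G.start]) (σ₀ := fun _ => .inl G.init)
    (I := fun σ x => ∃ q, G.Reach (q, x) ∧ G.Consistent q σ)
    (fun ⟨q, hx, _⟩ => hx.nts_eq_frontier ▸ G.nodup_frontier q)
    (fun ⟨_, hx, hσ⟩ hr hfires => hσ.exists_of_fires hx hr hfires)
    ⟨G.init, .refl, .inl fun _ _ => rfl⟩ hw.to_reflTransGen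
  · simp at htrap
  · exact ⟨q, rename_eq_map_inr hwx.symm ▸ hx⟩

lemma reflTransGen_mark (hf : f.ForcesTermination T k) {i : Fin G.nRules} {x : SForm T}
    (hx : G.Reach ((G.rule i).src, x)) :
    Relation.ReflTransGen ((G.terminatingSystem k).ModeStepB f m)
      (tag (G.stateTags (G.rule i).src) x) (tag (G.markedTags i) x) := by
  have hnts : nts x = G.frontier (G.rule i).src := hx.nts_eq_frontier
  have hnodup : (nts x).Nodup := hnts ▸ G.nodup_frontier _
  refine reflTransGen_retag ((G.nodup_frontier _).filter _) fun a l ha hl => ?_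
  have ha_mem : a ∈ G.others i := hl List.mem_cons_self
  rw [← retag_retag_singleton]
  refine GuardedRule.Fires.modeStepB (r := G.markRule i a) hf
    (mem_guardedRules.2 ⟨i, .inr (.inl ⟨a, ha_mem, rfl⟩)⟩) ?_ hnodup hx.ntCount_le
    (by simpa using hx.ntCount_le)
  refine (GuardedRule.fires_iff_of_rhs_eq rfl hnodup).2
    ⟨fun b _ => ?_, retag_of_notMem ha, hnts ▸ (mem_others.1 ha_mem).1, rfl⟩
  obtain hb | hb := retag_eq_or (G.stateTags (G.rule i).src) l (.inr i) b <;>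
    simp [hb, markRule]

lemma reflTransGen_unmark (hf : f.ForcesTermination T k) {i : Fin G.nRules} {x : SForm T}
    (hx : G.Reach ((G.rule i).tgt, x)) :
    Relation.ReflTransGen ((G.terminatingSystem k).ModeStepB f m)
      (tag (G.firedTags i) x) (tag (G.stateTags (G.rule i).tgt) x) := by
  have hnts : nts x = G.frontier (G.rule i).tgt := hx.nts_eq_frontier
  have hnodup : (nts x).Nodup := hnts ▸ G.nodup_frontier _
  rw [← tag_congr (σ := retag (G.firedTags i) (nts x) (.inl (G.rule i).tgt))
    fun a ha => retag_of_mem ha]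
  refine reflTransGen_retag hnodup fun a l ha hl => ?_
  have ha_mem : a ∈ nts x := hl List.mem_cons_self
  rw [← retag_retag_singleton]
  refine GuardedRule.Fires.modeStepB (r := G.unmarkRule i a) hf
    (mem_guardedRules.2 ⟨i, .inr (.inr ⟨a, hnts ▸ ha_mem, rfl⟩)⟩) ?_ hnodup hx.ntCount_le
    (by simpa using hx.ntCount_le)
  refine (GuardedRule.fires_iff_of_rhs_eq rfl hnodup).2
    ⟨fun b _ => ?_, retag_of_notMem ha, ha_mem, rfl⟩
  obtain hb | hb := retag_eq_or (G.firedTags i) l (.inl (G.rule i).tgt) b <;>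
    simp [hb, unmarkRule, (G.src_ne_tgt i).symm]

lemma fires_fireRule {i : Fin G.nRules} {u v : SForm T}
    (hx : nts (u ++ Sum.inl (G.rule i).lhs :: v) = G.frontier (G.rule i).src) :
    (G.fireRule i).Fires (G.markedTags i) (u ++ Sum.inl (G.rule i).lhs :: v)
      (tag (G.firedTags i) (u ++ (G.rule i).rhs ++ v)) := by
  have hmarked : ∀ a ∈ G.others i, G.markedTags i a = .inr i := fun _ => retag_of_mem
  have hothers := fun a ha => hmarked a (mem_others_of_mem hx a ha)
  refine ⟨fun b _ => ?_, retag_of_notMem (by simp [fireRule]), u, v, rfl, ?_⟩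
  · by_cases hb' : b ∈ G.others i
    · simp [fireRule, hmarked b hb']
    · exact fun h => hb' (List.pair_mem_product.1 h).1
  · rw [tag_congr fun a ha => hothers a (.inl ha), tag_congr fun a ha => hothers a (.inr ha),
      tag_append, tag_append]
    rfl

lemma lang_subset_terminatingSystem_langB (hf : f.ForcesTermination T k) :
    G.lang ⊆ (G.terminatingSystem k).langB f m := by
  refine lang_subset_langB (Tag := Q ⊕ Fin G.nRules) Sum.inl rfl ?_
  rintro c d hc hcd
  have hd := hc.tail hcd
  obtain ⟨i, u, v, rfl, rfl⟩ := hcd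
  have hfire : (G.terminatingSystem k).ModeStepB f m
      (tag (G.markedTags i) (u ++ Sum.inl (G.rule i).lhs :: v))
      (tag (G.firedTags i) (u ++ (G.rule i).rhs ++ v)) :=
    (fires_fireRule hc.nts_eq_frontier).modeStepB hf (mem_guardedRules.2 ⟨i, .inl rfl⟩)
      (hc.nts_eq_frontier ▸ G.nodup_frontier _) hc.ntCount_le (ntCount_tag.trans_le hd.ntCount_le)
  exact ((reflTransGen_mark hf hc).tail hfire).trans (reflTransGen_unmark hf hd)

end Terminating

end SepGrammar

theorem sepFamInd_subset_of_forcesTermination {lf : Bool} {m k : ℕ} {f : Mode}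
    (hf : f.ForcesTermination T k) : SepFamInd T lf m ⊆ CDFamIndInf T lf f m := by
  rintro L ⟨Q, _, G, hlf, hL⟩
  have := Encodable.ofCountable Q
  have hsub := G.terminatingSystem_lang_subset hf
  have hsup := G.lang_subset_terminatingSystem_langB hf
  refine ⟨G.terminatingSystem k, fun h => SepGrammar.terminatingSystem_lamFree (hlf h) k, ?_,
    hsub.trans hsup⟩
  rwa [hsub.antisymm (hsup.trans (CDGS.langB_subset_lang _ _ _))]

/-! ### The derivation modes of the theorem -/

namespace Mode

lemma forcesSteps_eq (K : ℕ) : (Mode.eq K).ForcesSteps T K := fun _ _ => ⟨rfl, fun _ h => h.ge⟩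

lemma forcesSteps_ge (K : ℕ) : (Mode.ge K).ForcesSteps T K := fun _ _ => ⟨le_rfl, fun _ h => h⟩

lemma forcesSteps_ge_conj_le {K k : ℕ} (h : K ≤ k) :
    (Mode.conj (Mode.ge K) (Mode.le k)).ForcesSteps T K :=
  fun _ _ => ⟨⟨le_rfl, h⟩, fun _ h => h.1⟩

lemma forcesTermination_t (k : ℕ) : Mode.t.ForcesTermination T k := fun _ _ =>
  ⟨stuck_iff_not_exists_rStep.1, fun _ => stuck_iff_not_exists_rStep.2⟩

lemma ForcesTermination.conj {f g : Mode} {k : ℕ} (hf : f.ForcesTermination T k)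
    (hg : ∀ (P : List (Rule T)) y, modeOK P g (k + 1) y) :
    (Mode.conj f g).ForcesTermination T k := fun P y =>
  ⟨fun h => ⟨(hf P y).1 h, hg P y⟩, fun _ h => (hf P y).2 _ h.1⟩

end Mode

theorem stmt13_general {T : Type} (lf : Bool) (m : ℕ) (hm : 1 ≤ m) (f : Mode)
    (hf : f = Mode.t ∨
      (∃ k'' : ℕ, m ≤ k'' ∧ (f = Mode.eq k'' ∨ f = Mode.ge k'')) ∨
      (∃ k' k'' : ℕ, m ≤ k'' ∧ k'' ≤ k' ∧ f = Mode.conj (Mode.ge k'') (Mode.le k')) ∨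
      (∃ k : ℕ, 1 ≤ k ∧ (f = Mode.conj Mode.t (Mode.eq k) ∨
        f = Mode.conj Mode.t (Mode.le k) ∨ f = Mode.conj Mode.t (Mode.ge k)))) :
    PFamInd T lf false m = CDFamIndInf T lf f m := by
  rw [pFamInd_eq_sepFamInd lf hm]
  refine Set.Subset.antisymm ?_ (cdFamIndInf_subset_sepFamInd lf f hm)
  obtain rfl | ⟨K, hK, rfl | rfl⟩ | ⟨k, K, hK, hKk, rfl⟩ | ⟨k, hk, hf⟩ := hf
  · exact sepFamInd_subset_of_forcesTermination (Mode.forcesTermination_t 0)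
  · exact sepFamInd_subset_of_forcesSteps hK (Mode.forcesSteps_eq K)
  · exact sepFamInd_subset_of_forcesSteps hK (Mode.forcesSteps_ge K)
  · exact sepFamInd_subset_of_forcesSteps hK (Mode.forcesSteps_ge_conj_le hKk)
  · obtain ⟨k, rfl⟩ := Nat.exists_eq_add_of_le' hk
    refine sepFamInd_subset_of_forcesTermination (k := k) ?_
    obtain rfl | rfl | rfl := hf
    exacts [(Mode.forcesTermination_t k).conj fun _ _ => rfl,
      (Mode.forcesTermination_t k).conj fun _ _ => le_rfl,
      (Mode.forcesTermination_t k).conj fun _ _ => le_rfl]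

/-- Let m ∈ ℕ (positive) and let f be one of the modes
t; =k'' or ≥k'' with k'' ≥ m; (≥k''∧≤k') with k' ≥ k'' ≥ m; or (t∧=k), (t∧≤k),
(t∧≥k) with arbitrary k ∈ ℕ. Then L_m(P, CF[−λ]) = L_m(CD_∞, CF[−λ], f),
both with and without erasing rules. -/
theorem stmt13 (lf : Bool) (m : ℕ) (hm : 1 ≤ m) (f : Mode)
    (hf : f = Mode.t ∨
      (∃ k'' : ℕ, m ≤ k'' ∧ (f = Mode.eq k'' ∨ f = Mode.ge k'')) ∨
      (∃ k' k'' : ℕ, m ≤ k'' ∧ k'' ≤ k' ∧ f = Mode.conj (Mode.ge k'') (Mode.le k')) ∨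
      (∃ k : ℕ, 1 ≤ k ∧ (f = Mode.conj Mode.t (Mode.eq k) ∨
        f = Mode.conj Mode.t (Mode.le k) ∨ f = Mode.conj Mode.t (Mode.ge k)))) :
    PFamInd ℕ lf false m = CDFamIndInf ℕ lf f m :=
  stmt13_general lf m hm f hf

end CDHybrid
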